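/- arXiv:1610.08671 — 3 statements merged into one kernel-verified Lean document; each statement's English description precedes it below -/
import Mathlib

section
/- Let a₁, a₂, a₃, a₄ ∈ 𝔽[t] be squarefree nonzero polynomials and let f ∈ 𝔽[t] be a monic irreducible polynomial dividing exactly two of the coefficients, say aᵢ and aⱼ, and not dividing the other two coefficients a_k and a_l (where {i,j,k,l} = {1,2,3,4}). Then the equation a₁x₁² + a₂x₂² + a₃x₃² + a₄x₄² = 0 has a nontrivial solution in the f-adic completion 𝔽_q(t)_(f) if and only if at least one of the following holds: (1) −a_k a_l is a square modulo f; (2) −(aᵢ/f)(aⱼ/f) is a square modulo f. -/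
open Polynomial IsDedekindDomain

set_option synthInstance.maxHeartbeats 1000000

/-- The height-one prime of `F[X]` generated by an irreducible polynomial `f`. -/
noncomputable def primeOfIrreducible {F : Type*} [Field F] {f : F[X]}
    (hf : Irreducible f) : HeightOneSpectrum F[X] where
  asIdeal := Ideal.span {f}
  isPrime := (Ideal.span_singleton_prime hf.ne_zero).mpr hf.prime
  ne_bot := by simpa [Ideal.span_singleton_eq_bot] using hf.ne_zero

section qli
open Filter Topology WithZero

theorem qli_tendsto_pow {K : Type*} [Field K] [Valued K ℤᵐ⁰] {z : K}
    (hz : Valued.v z < 1) : Tendsto (fun n : ℕ => z ^ n) atTop (𝓝 0) := by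
  rw [(Valued.hasBasis_nhds_zero K ℤᵐ⁰).tendsto_right_iff]
  intro γ _
  have hne : MonoidWithZeroHom.ValueGroup₀.embedding (γ : MonoidWithZeroHom.ValueGroup₀ (.ofClass (Valued.v (R := K) (Γ₀ := ℤᵐ⁰)))) ≠ 0 := by
    simp
  obtain ⟨n, hn⟩ := exists_pow_lt₀ hz (Units.mk0 _ hne)
  filter_upwards [eventually_ge_atTop n] with m hm
  show Valued.v.restrict (z ^ m) < _
  rw [Valuation.restrict_lt_iff_lt_embedding, map_pow]
  refine lt_of_le_of_lt ?_ hn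
  exact pow_le_pow_right_of_le_one' hz.le hm

theorem qli_isSquare {K : Type*} [Field K] [Valued K ℤᵐ⁰] [CompleteSpace K] [T0Space K]
    (p : ℕ) [hp : Fact p.Prime] [CharP K p] (hp2 : p ≠ 2) {u : K}
    (hu : Valued.v (u - 1) < 1) : IsSquare u := by
  have hodd : Odd p := hp.out.odd_of_ne_two hp2
  have hpow : ∀ w : K, Valued.v (w - 1) < 1 → Tendsto (fun n : ℕ => w ^ p ^ n) atTop (𝓝 1) := by
    intro w hw
    have h1 := (qli_tendsto_pow hw).comp (tendsto_pow_atTop_atTop_of_one_lt hp.out.one_lt)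
    have h2 := h1.add_const 1
    rw [zero_add] at h2
    refine h2.congr fun n => ?_
    simp only [Function.comp]
    rw [sub_pow_char_pow, one_pow, sub_add_cancel]
  obtain ⟨r, hr⟩ := hodd
  -- `w = u ^ r` is close to one
  have hw : Valued.v (u ^ r - 1) < 1 := by
    obtain ⟨c, hc⟩ := sub_one_dvd_pow_sub_one u r
    have hu1 : Valued.v u = 1 := by
      have := Valuation.map_one_add_of_lt (v := Valued.v) hu
      simpa using this
    have hgs : u ^ r - 1 = (∑ i ∈ Finset.range r, u ^ i) * (u - 1) := (geom_sum_mul u r).symm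
    rw [hgs, map_mul]
    refine mul_lt_one_of_nonneg_of_lt_one_right ?_ zero_le hu
    refine Valuation.map_sum_le _ fun i _ => ?_
    simp [hu1]
  let e : ℕ → ℕ := fun n => (p ^ n + 1) / 2
  have he : ∀ n, e n * 2 = p ^ n + 1 := by
    intro n
    have : Odd (p ^ n) := Odd.pow ⟨r, hr⟩
    obtain ⟨s, hs⟩ := this
    simp only [e]; omega
  have he' : ∀ n, e (n + 1) = e n + r * p ^ n := by
    intro n
    have h1 := he n
    have h2 := he (n + 1)
    have h3 : p ^ (n + 1) = 2 * (r * p ^ n) + p ^ n := by rw [pow_succ]; nlinarith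
    omega
  have hu1 : Valued.v u = 1 := by
    have := Valuation.map_one_add_of_lt (v := Valued.v) hu
    simpa using this
  have hdiff : Tendsto (fun n => u ^ e (n + 1) - u ^ e n) atTop (𝓝 0) := by
    have h1 := (qli_tendsto_pow hw).comp (tendsto_pow_atTop_atTop_of_one_lt hp.out.one_lt)
    rw [(Valued.hasBasis_nhds_zero K ℤᵐ⁰).tendsto_right_iff] at h1 ⊢
    intro γ hγ
    filter_upwards [h1 γ hγ] with n hn
    have h4 : u ^ e (n + 1) - u ^ e n = u ^ e n * (u ^ r - 1) ^ p ^ n := by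
      rw [sub_pow_char_pow, one_pow, he', pow_add, pow_mul]; ring
    have hn' : Valued.v.restrict ((u ^ r - 1) ^ p ^ n) < (γ : MonoidWithZeroHom.ValueGroup₀ _) := hn
    show Valued.v.restrict (u ^ e (n + 1) - u ^ e n) < _
    rw [Valuation.restrict_lt_iff_lt_embedding] at hn' ⊢
    rw [h4, map_mul, map_pow, hu1, one_pow, one_mul]
    exact hn'
  have : NonarchimedeanRing K :=
    (Valued.toUniformSpace_eq K ℤᵐ⁰).symm ▸ (Valued.v (R := K) (Γ₀ := ℤᵐ⁰)).subgroups_basis.nonarchimedean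
  have hc : CauchySeq (fun n => u ^ e n) := NonarchimedeanAddGroup.cauchySeq_of_tendsto_sub_nhds_zero hdiff
  obtain ⟨y, hy⟩ := cauchySeq_tendsto_of_complete hc
  have hy2 := hy.mul hy
  have hy3 : Tendsto (fun n => u ^ e n * u ^ e n) atTop (𝓝 u) := by
    have := (hpow u hu).mul_const u
    rw [one_mul] at this
    refine this.congr fun n => ?_
    rw [← pow_add, ← pow_succ, ← he n, mul_two]
  exact ⟨y, tendsto_nhds_unique hy3 hy2⟩

section main
variable {F : Type*} [Field F] {f : F[X]} (hf : Irreducible f)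


theorem qli_v (r : F[X]) : Valued.v (algebraMap F[X] ((primeOfIrreducible hf).adicCompletion (RatFunc F)) r) = (primeOfIrreducible hf).intValuation r := by
  rw [← HeightOneSpectrum.valuation_of_algebraMap (K := RatFunc F)]
  exact HeightOneSpectrum.valuedAdicCompletion_eq_valuation (K := RatFunc F) _ r

theorem qli_le (r : F[X]) : Valued.v (algebraMap F[X] ((primeOfIrreducible hf).adicCompletion (RatFunc F)) r) ≤ 1 := by
  rw [qli_v]; exact HeightOneSpectrum.intValuation_le_one _ _

theorem qli_lt_iff (r : F[X]) : Valued.v (algebraMap F[X] ((primeOfIrreducible hf).adicCompletion (RatFunc F)) r) < 1 ↔ f ∣ r := by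
  rw [qli_v, HeightOneSpectrum.intValuation_lt_one_iff_mem]
  exact Ideal.mem_span_singleton

theorem qli_eq_one {r : F[X]} (h : ¬ f ∣ r) : Valued.v (algebraMap F[X] ((primeOfIrreducible hf).adicCompletion (RatFunc F)) r) = 1 :=
  le_antisymm (qli_le hf r) (not_lt.mp (mt (qli_lt_iff hf r).mp h))

theorem qli_f : Valued.v (algebraMap F[X] ((primeOfIrreducible hf).adicCompletion (RatFunc F)) f) = exp (-1 : ℤ) := by
  rw [qli_v]
  exact HeightOneSpectrum.intValuation_singleton _ hf.ne_zero rfl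

theorem qli_approx (z : ((primeOfIrreducible hf).adicCompletion (RatFunc F))) (hz : Valued.v z ≤ 1) : ∃ c : F[X], Valued.v (z - algebraMap F[X] ((primeOfIrreducible hf).adicCompletion (RatFunc F)) c) < 1 := by
  have hopen : {y : ((primeOfIrreducible hf).adicCompletion (RatFunc F)) | Valued.v (y - z) < 1} ∈ 𝓝 z := by
    rw [Valued.mem_nhds]
    refine ⟨1, fun y hy => ?_⟩
    have hy' : Valued.v.restrict (y - z) < _ := hy
    rw [Valuation.restrict_lt_iff_lt_embedding] at hy'
    simpa using hy'
  obtain ⟨y, hy⟩ := (HeightOneSpectrum.denseRange_algebraMap (RatFunc F)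
    (primeOfIrreducible hf)).exists_mem_open isOpen_interior ⟨z, mem_interior_iff_mem_nhds.mpr hopen⟩
  have hy1 : Valued.v (algebraMap (RatFunc F) ((primeOfIrreducible hf).adicCompletion (RatFunc F)) y - z) < 1 := by
    have hy0 := interior_subset hy
    exact hy0
  have hy2 : Valued.v (algebraMap (RatFunc F) ((primeOfIrreducible hf).adicCompletion (RatFunc F)) y) ≤ 1 := by
    have := Valuation.map_add Valued.v (algebraMap (RatFunc F) ((primeOfIrreducible hf).adicCompletion (RatFunc F)) y - z) z
    rw [sub_add_cancel] at this
    exact this.trans (max_le hy1.le hz)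
  have hval : ∀ k : RatFunc F, Valued.v (algebraMap (RatFunc F) ((primeOfIrreducible hf).adicCompletion (RatFunc F)) k)
      = (primeOfIrreducible hf).valuation (RatFunc F) k := fun k =>
    HeightOneSpectrum.valuedAdicCompletion_eq_valuation' _ k
  rw [hval] at hy2
  obtain ⟨c, hc⟩ := HeightOneSpectrum.exists_valuation_sub_lt_of_integer _ hy2 1
  refine ⟨c, ?_⟩
  rw [← hval, map_sub, ← IsScalarTower.algebraMap_apply] at hc
  have : z - algebraMap F[X] ((primeOfIrreducible hf).adicCompletion (RatFunc F)) c = -((algebraMap (RatFunc F) ((primeOfIrreducible hf).adicCompletion (RatFunc F)) y - z) + (algebraMap F[X] ((primeOfIrreducible hf).adicCompletion (RatFunc F)) c - algebraMap (RatFunc F) ((primeOfIrreducible hf).adicCompletion (RatFunc F)) y)) := by ring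
  rw [this, Valuation.map_neg]
  exact Valuation.map_add_lt _ hy1 (by simpa using hc)

/-- Lifting square roots. -/
theorem qli_lift [Fintype F] (hodd : ringChar F ≠ 2) {r : F[X]} (hr : ¬ f ∣ r)
    (hs : IsSquare (Ideal.Quotient.mk (Ideal.span {f}) r)) : ∃ y : ((primeOfIrreducible hf).adicCompletion (RatFunc F)), y ^ 2 = algebraMap F[X] ((primeOfIrreducible hf).adicCompletion (RatFunc F)) r := by
  obtain ⟨c', hc⟩ := hs
  obtain ⟨c, rfl⟩ := Ideal.Quotient.mk_surjective c'
  rw [← map_mul, Ideal.Quotient.eq, Ideal.mem_span_singleton] at hc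
  have hcf : ¬ f ∣ c := by
    intro h
    apply hr
    have := dvd_add hc (h.mul_right c)
    simpa using this
  have hc1 := qli_eq_one hf hcf
  have hc0 : algebraMap F[X] ((primeOfIrreducible hf).adicCompletion (RatFunc F)) c ≠ 0 := by
    intro h; rw [h] at hc1; simp at hc1
  have : Fact (ringChar F).Prime := ⟨CharP.char_is_prime F (ringChar F)⟩
  have : CharP F[X] (ringChar F) := inferInstance
  have : CharP (RatFunc F) (ringChar F) := charP_of_injective_algebraMap (IsFractionRing.injective F[X] (RatFunc F)) _
  have : CharP ((primeOfIrreducible hf).adicCompletion (RatFunc F)) (ringChar F) :=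
    charP_of_injective_algebraMap (algebraMap (RatFunc F) ((primeOfIrreducible hf).adicCompletion (RatFunc F))).injective _
  have h := qli_isSquare (K := ((primeOfIrreducible hf).adicCompletion (RatFunc F))) (ringChar F) hodd (u := algebraMap F[X] ((primeOfIrreducible hf).adicCompletion (RatFunc F)) r / (algebraMap F[X] ((primeOfIrreducible hf).adicCompletion (RatFunc F)) c * algebraMap F[X] ((primeOfIrreducible hf).adicCompletion (RatFunc F)) c)) (by
    have : algebraMap F[X] ((primeOfIrreducible hf).adicCompletion (RatFunc F)) r / (algebraMap F[X] ((primeOfIrreducible hf).adicCompletion (RatFunc F)) c * algebraMap F[X] ((primeOfIrreducible hf).adicCompletion (RatFunc F)) c) - 1 = algebraMap F[X] ((primeOfIrreducible hf).adicCompletion (RatFunc F)) (r - c * c) / (algebraMap F[X] ((primeOfIrreducible hf).adicCompletion (RatFunc F)) c * algebraMap F[X] ((primeOfIrreducible hf).adicCompletion (RatFunc F)) c) := by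
      rw [map_sub, map_mul]; field_simp
    rw [this, map_div₀, map_mul, hc1, mul_one, div_one]
    exact (qli_lt_iff hf _).mpr hc)
  obtain ⟨y, hy⟩ := h
  refine ⟨y * algebraMap F[X] ((primeOfIrreducible hf).adicCompletion (RatFunc F)) c, ?_⟩
  rw [div_eq_iff (mul_ne_zero hc0 hc0)] at hy
  rw [hy]; ring

theorem qli_aniso_aux {α β : F[X]} (hβ : ¬ f ∣ β)
    (hn : ¬ IsSquare (Ideal.Quotient.mk (Ideal.span {f}) (-(α * β)))) (x y : ((primeOfIrreducible hf).adicCompletion (RatFunc F)))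
    (hxy : Valued.v x ≤ Valued.v y) :
    Valued.v (algebraMap F[X] ((primeOfIrreducible hf).adicCompletion (RatFunc F)) α * x ^ 2 + algebraMap F[X] ((primeOfIrreducible hf).adicCompletion (RatFunc F)) β * y ^ 2) = Valued.v y ^ 2 := by
  by_cases hy : y = 0
  · subst hy
    have : x = 0 := by simpa using hxy
    subst this; simp
  have hvy : Valued.v y ≠ 0 := by simpa using hy
  have e : algebraMap F[X] ((primeOfIrreducible hf).adicCompletion (RatFunc F)) α * x ^ 2 + algebraMap F[X] ((primeOfIrreducible hf).adicCompletion (RatFunc F)) β * y ^ 2 = (algebraMap F[X] ((primeOfIrreducible hf).adicCompletion (RatFunc F)) α * (x / y) ^ 2 + algebraMap F[X] ((primeOfIrreducible hf).adicCompletion (RatFunc F)) β) * y ^ 2 := by field_simp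
  have hz : Valued.v (x / y) ≤ 1 := by
    rw [map_div₀]; exact div_le_one_of_le₀ hxy zero_le
  rw [e, map_mul, map_pow]
  suffices h : Valued.v (algebraMap F[X] ((primeOfIrreducible hf).adicCompletion (RatFunc F)) α * (x / y) ^ 2 + algebraMap F[X] ((primeOfIrreducible hf).adicCompletion (RatFunc F)) β) = 1 by rw [h, one_mul]
  have hle : Valued.v (algebraMap F[X] ((primeOfIrreducible hf).adicCompletion (RatFunc F)) α * (x / y) ^ 2 + algebraMap F[X] ((primeOfIrreducible hf).adicCompletion (RatFunc F)) β) ≤ 1 := by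
    refine Valuation.map_add_le _ ?_ (qli_le hf β)
    rw [map_mul, map_pow]
    exact mul_le_one' (qli_le hf α) (pow_le_one' hz 2)
  refine le_antisymm hle (not_lt.mp fun hlt => hn ?_)
  obtain ⟨c, hc⟩ := qli_approx hf (x / y) hz
  have h2 : algebraMap F[X] ((primeOfIrreducible hf).adicCompletion (RatFunc F)) (α * c ^ 2 + β) = (algebraMap F[X] ((primeOfIrreducible hf).adicCompletion (RatFunc F)) α * (x / y) ^ 2 + algebraMap F[X] ((primeOfIrreducible hf).adicCompletion (RatFunc F)) β)
      + -(algebraMap F[X] ((primeOfIrreducible hf).adicCompletion (RatFunc F)) α * (x / y + algebraMap F[X] ((primeOfIrreducible hf).adicCompletion (RatFunc F)) c) * (x / y - algebraMap F[X] ((primeOfIrreducible hf).adicCompletion (RatFunc F)) c)) := by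
    simp only [map_add, map_mul, map_pow]; ring
  have h3 : f ∣ α * c ^ 2 + β := by
    rw [← qli_lt_iff hf, h2]
    refine Valuation.map_add_lt _ hlt ?_
    rw [Valuation.map_neg, map_mul, map_mul]
    refine mul_lt_one_of_nonneg_of_lt_one_right (mul_le_one' (qli_le hf α) ?_) zero_le hc
    exact Valuation.map_add_le _ hz (qli_le hf c)
  refine ⟨Ideal.Quotient.mk _ (α * c), ?_⟩
  rw [← map_mul, Ideal.Quotient.eq, Ideal.mem_span_singleton]
  have : -(α * β) - α * c * (α * c) = -(α * (α * c ^ 2 + β)) := by ring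
  rw [this]
  exact (h3.mul_left α).neg_right

theorem qli_aniso {α β : F[X]} (hα : ¬ f ∣ α) (hβ : ¬ f ∣ β)
    (hn : ¬ IsSquare (Ideal.Quotient.mk (Ideal.span {f}) (-(α * β)))) (x y : ((primeOfIrreducible hf).adicCompletion (RatFunc F))) :
    Valued.v (algebraMap F[X] ((primeOfIrreducible hf).adicCompletion (RatFunc F)) α * x ^ 2 + algebraMap F[X] ((primeOfIrreducible hf).adicCompletion (RatFunc F)) β * y ^ 2) = max (Valued.v x) (Valued.v y) ^ 2 := by
  rcases le_total (Valued.v x) (Valued.v y) with h | h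
  · rw [max_eq_right h]; exact qli_aniso_aux hf hβ hn x y h
  · rw [max_eq_left h, add_comm]
    rw [mul_comm] at hn
    exact qli_aniso_aux hf hα hn y x h

end main

theorem qli_parity {m n : ℤᵐ⁰} (h : exp (-1 : ℤ) * m ^ 2 = n ^ 2) : m = 0 ∧ n = 0 := by
  by_cases hm : m = 0
  · subst hm
    refine ⟨rfl, ?_⟩
    have : n ^ 2 = 0 := by rw [← h]; simp
    exact pow_eq_zero_iff (two_ne_zero) |>.mp this
  · exfalso
    have hn : n ≠ 0 := by
      rintro rfl
      simp [hm] at h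
    have h1 := congrArg log h
    rw [log_mul (by simp) (pow_ne_zero _ hm), log_pow, log_pow, log_exp] at h1
    have h2 : (-1 : ℤ) + 2 * log m = 2 * log n := by simpa using h1
    omega

theorem qli_distinct : ∀ i j k l : Fin 4, ({i, j, k, l} : Finset (Fin 4)) = Finset.univ →
    i ≠ j ∧ i ≠ k ∧ i ≠ l ∧ j ≠ k ∧ j ≠ l ∧ k ≠ l := by decide

end qli

/-- for squarefree `a₁, a₂, a₃, a₄` and a monic irreducible `f` dividing
exactly the two coefficients `aᵢ, aⱼ` (and not `a_k, a_l`), the equation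
`a₁x₁² + a₂x₂² + a₃x₃² + a₄x₄² = 0` has a nontrivial solution in the `f`-adic completion
of `𝔽_q(t)` iff `−a_k a_l` or `−(aᵢ/f)(aⱼ/f)` is a square modulo `f`. -/
theorem quaternary_local_isotropy_iff
    {F : Type*} [Field F] [Fintype F] (hodd : ringChar F ≠ 2)
    (a : Fin 4 → F[X]) (ha : ∀ m, Squarefree (a m))
    (f : F[X]) (hfm : f.Monic) (hf : Irreducible f)
    (i j k l : Fin 4) (huniv : ({i, j, k, l} : Finset (Fin 4)) = Finset.univ)
    (hdi : f ∣ a i) (hdj : f ∣ a j) (hdk : ¬ f ∣ a k) (hdl : ¬ f ∣ a l) :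
    (∃ x : Fin 4 → (primeOfIrreducible hf).adicCompletion (RatFunc F),
        x ≠ 0 ∧
        ∑ m, algebraMap F[X] ((primeOfIrreducible hf).adicCompletion (RatFunc F)) (a m)
            * x m ^ 2 = 0) ↔
      (IsSquare (Ideal.Quotient.mk (Ideal.span {f}) (-(a k * a l))) ∨
       IsSquare (Ideal.Quotient.mk (Ideal.span {f}) (-((a i / f) * (a j / f))))) := by
  classical
  obtain ⟨hij, hik, hil, hjk, hjl, hkl⟩ := qli_distinct i j k l huniv
  have hsum : ∀ g : Fin 4 → (primeOfIrreducible hf).adicCompletion (RatFunc F),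
      ∑ m, g m = g i + g j + g k + g l := by
    intro g
    rw [← huniv, Finset.sum_insert (by simp [hij, hik, hil]),
      Finset.sum_insert (by simp [hjk, hjl]), Finset.sum_insert (by simp [hkl]),
      Finset.sum_singleton]
    ring
  simp only [hsum]
  have hdiv : ∀ m, f ∣ a m → a m = f * (a m / f) ∧ ¬ f ∣ a m / f := by
    intro m hm
    have h1 : a m = f * (a m / f) := (EuclideanDomain.mul_div_cancel' hf.ne_zero hm).symm
    refine ⟨h1, fun h => ?_⟩
    exact hf.not_isUnit (ha m f (by rw [h1]; exact mul_dvd_mul_left f h))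
  obtain ⟨hi, hi'⟩ := hdiv i hdi
  obtain ⟨hj, hj'⟩ := hdiv j hdj
  set b := a i / f with hb
  set c := a j / f with hc
  have hnd : ∀ {r s : F[X]}, ¬ f ∣ r → ¬ f ∣ s → ¬ f ∣ -(r * s) := by
    intro r s hr hs h
    rw [dvd_neg] at h
    exact (hf.prime.dvd_or_dvd h).elim hr hs
  have hne : ∀ {r : F[X]}, ¬ f ∣ r →
      algebraMap F[X] ((primeOfIrreducible hf).adicCompletion (RatFunc F)) r ≠ 0 := by
    intro r hr h
    have := qli_eq_one hf hr
    rw [h] at this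
    simp at this
  constructor
  · rintro ⟨x, hx0, hx⟩
    by_contra hcon
    push Not at hcon
    obtain ⟨h1, h2⟩ := hcon
    have e1 := qli_aniso hf hdk hdl h1 (x k) (x l)
    have e2 := qli_aniso hf hi' hj' h2 (x i) (x j)
    have e3 := congrArg Valued.v (show algebraMap F[X] _ f *
        (algebraMap F[X] _ b * x i ^ 2 + algebraMap F[X] _ c * x j ^ 2)
        = -(algebraMap F[X] _ (a k) * x k ^ 2 + algebraMap F[X] _ (a l) * x l ^ 2) by
      rw [hi, hj] at hx
      simp only [map_mul] at hx
      linear_combination hx)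
    rw [Valuation.map_neg, map_mul, e1, e2, qli_f] at e3
    obtain ⟨m1, m2⟩ := qli_parity e3
    have z : ∀ w, Valued.v (x w) ≤ 0 → x w = 0 := by
      intro w hw
      simpa using hw
    apply hx0
    funext w
    have hw : w ∈ ({i, j, k, l} : Finset (Fin 4)) := by rw [huniv]; exact Finset.mem_univ w
    simp only [Finset.mem_insert, Finset.mem_singleton] at hw
    apply z
    rcases hw with rfl | rfl | rfl | rfl
    · exact m1 ▸ le_max_left _ _
    · exact m1 ▸ le_max_right _ _
    · exact m2 ▸ le_max_left _ _
    · exact m2 ▸ le_max_right _ _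
  · rintro (h | h)
    · obtain ⟨y, hy⟩ := qli_lift hf hodd (hnd hdk hdl) h
      refine ⟨fun m => if m = k then y else if m = l then algebraMap F[X] _ (a k) else 0, ?_, ?_⟩
      · intro h0
        have := congrFun h0 l
        simp only [hkl.symm, if_true, if_false, Pi.zero_apply] at this
        exact hne hdk this
      · simp only [hik, hil, hjk, hjl, hkl.symm, if_true, if_false, hy]
        simp only [map_neg, map_mul]
        ring
    · obtain ⟨y, hy⟩ := qli_lift hf hodd (hnd hi' hj') h
      refine ⟨fun m => if m = i then y else if m = j then algebraMap F[X] _ b else 0, ?_, ?_⟩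
      · intro h0
        have := congrFun h0 j
        simp only [hij.symm, if_true, if_false, Pi.zero_apply] at this
        exact hne hi' this
      · simp only [hij.symm, hik.symm, hil.symm, hjk.symm, hjl.symm, if_true, if_false, hy]
        rw [hi, hj]
        simp only [map_neg, map_mul]
        ring
end

section
/- Let a₁, a₂, a₃, a₄ ∈ 𝔽[t] be squarefree nonzero polynomials. Assume that aᵢ and aⱼ are of even degree and the other two coefficients a_k and a_l are of odd degree (where {i,j,k,l} = {1,2,3,4}). Let c_m denote the leading coefficient of a_m for m = 1, …, 4. Then the quadratic form a₁x₁² + a₂x₂² + a₃x₃² + a₄x₄² has no nontrivial zero over 𝔽((1/t)) if and only if −cᵢcⱼ and −c_k c_l are both non-squares in 𝔽. -/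
open Polynomial

/-- The embedding of `𝔽[t]` into `𝔽((1/t))`, sending `t` to the inverse of the
Laurent-series variable `u`. -/
noncomputable def polyToLaurentInfty (F : Type*) [Field F] : F[X] →+* LaurentSeries F :=
  (Polynomial.aeval ((HahnSeries.single (1 : ℤ) (1 : F) : LaurentSeries F)⁻¹)).toRingHom

/-- A power series with nonzero constant coefficient is its constant coefficient times a square. -/
theorem powerSeries_eq_const_mul_sq {F : Type*} [Field F] (h2 : (2 : F) ≠ 0) (f : PowerSeries F)
    (c : F) (hc : c ≠ 0) (hf : PowerSeries.constantCoeff f = c) :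
    ∃ g : PowerSeries F, g ≠ 0 ∧ f = PowerSeries.C c * g ^ 2 := by
  have hmem : ∀ h : PowerSeries F, PowerSeries.constantCoeff h = 0 →
      h ∈ Ideal.span {(PowerSeries.X : PowerSeries F)} := by
    intro h hh
    rw [Ideal.mem_span_singleton]
    exact PowerSeries.X_dvd_iff.2 hh
  obtain ⟨g, hg, -⟩ := HenselianRing.is_henselian
    (I := Ideal.span {(PowerSeries.X : PowerSeries F)})
    (X ^ 2 - Polynomial.C (PowerSeries.C c⁻¹ * f) : (PowerSeries F)[X])
    (monic_X_pow_sub_C _ (by norm_num)) 1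
    (hmem _ (by simp [hf, hc]))
    (by
      apply IsUnit.map
      rw [PowerSeries.isUnit_iff_constantCoeff]
      have h2' : (1 + 1 : F) ≠ 0 := by rwa [one_add_one_eq_two]
      simpa using h2')
  have hg' : g ^ 2 = PowerSeries.C c⁻¹ * f := by
    have : eval g (X ^ 2 - Polynomial.C (PowerSeries.C c⁻¹ * f) : (PowerSeries F)[X]) = 0 := hg
    simpa [sub_eq_zero] using this
  have hfg : f = PowerSeries.C c * g ^ 2 := by
    rw [hg', ← mul_assoc, ← map_mul, mul_inv_cancel₀ hc, map_one, one_mul]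
  refine ⟨g, ?_, hfg⟩
  rintro rfl
  apply hc
  rw [← hf, hfg]
  simp

theorem polyToLaurentInfty_eq {F : Type*} [Field F] (p : F[X]) :
    polyToLaurentInfty F p =
      HahnSeries.ofPowerSeries ℤ F (p.reverse : PowerSeries F) *
        ((HahnSeries.single (1 : ℤ) (1 : F) : LaurentSeries F)⁻¹) ^ p.natDegree := by
  set u : LaurentSeries F := HahnSeries.single (1 : ℤ) (1 : F) with hu
  have hu0 : u ≠ 0 := by simp [hu]
  let _ : Invertible u⁻¹ := invertibleOfNonzero (inv_ne_zero hu0)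
  have h := eval₂_reverse_mul_pow (algebraMap F (LaurentSeries F)) u⁻¹ p
  have h1 : polyToLaurentInfty F p = eval₂ (algebraMap F (LaurentSeries F)) u⁻¹ p := rfl
  rw [h1, ← h, invOf_eq_inv, inv_inv]
  congr 1
  induction p.reverse using Polynomial.induction_on' with
  | add p q hp hq => simp [eval₂_add, hp, hq]
  | monomial n a =>
    rw [eval₂_monomial, ← C_mul_X_pow_eq_monomial]
    simp [hu, HahnSeries.ofPowerSeries_C, HahnSeries.ofPowerSeries_X, HahnSeries.C_apply,
      LaurentSeries.algebraMap_apply]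

theorem polyToLaurentInfty_eq_sq {F : Type*} [Field F] (h2 : (2 : F) ≠ 0) (p : F[X])
    (hp : p ≠ 0) :
    ∃ s : LaurentSeries F, s ≠ 0 ∧ polyToLaurentInfty F p = HahnSeries.C p.leadingCoeff * s ^ 2 *
      ((HahnSeries.single (1 : ℤ) (1 : F) : LaurentSeries F)⁻¹) ^ p.natDegree := by
  obtain ⟨g, hg0, hg⟩ := powerSeries_eq_const_mul_sq h2 (p.reverse : PowerSeries F) p.leadingCoeff
    (leadingCoeff_ne_zero.2 hp) (by simp)
  refine ⟨HahnSeries.ofPowerSeries ℤ F g, ?_, ?_⟩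
  · rwa [Ne, map_eq_zero_iff _ HahnSeries.ofPowerSeries_injective]
  · rw [polyToLaurentInfty_eq, hg]
    simp [HahnSeries.ofPowerSeries_C]

theorem polyToLaurentInfty_even {F : Type*} [Field F] (h2 : (2 : F) ≠ 0) (p : F[X])
    (hp : p ≠ 0) (he : Even p.natDegree) :
    ∃ s : LaurentSeries F, s ≠ 0 ∧
      polyToLaurentInfty F p = HahnSeries.C p.leadingCoeff * s ^ 2 := by
  obtain ⟨s, hs, h⟩ := polyToLaurentInfty_eq_sq h2 p hp
  obtain ⟨n, hn⟩ := he
  refine ⟨s * ((HahnSeries.single (1 : ℤ) (1 : F) : LaurentSeries F)⁻¹) ^ n, ?_, ?_⟩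
  · exact mul_ne_zero hs (pow_ne_zero _ (inv_ne_zero (by simp)))
  · rw [h, hn]; ring

theorem polyToLaurentInfty_odd {F : Type*} [Field F] (h2 : (2 : F) ≠ 0) (p : F[X])
    (hp : p ≠ 0) (he : Odd p.natDegree) :
    ∃ s : LaurentSeries F, s ≠ 0 ∧
      polyToLaurentInfty F p = HahnSeries.single (1 : ℤ) (1 : F) *
        (HahnSeries.C p.leadingCoeff * s ^ 2) := by
  obtain ⟨s, hs, h⟩ := polyToLaurentInfty_eq_sq h2 p hp
  obtain ⟨n, hn⟩ := he
  have hu0 : (HahnSeries.single (1 : ℤ) (1 : F) : LaurentSeries F) ≠ 0 := by simp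
  refine ⟨s * ((HahnSeries.single (1 : ℤ) (1 : F) : LaurentSeries F)⁻¹) ^ (n + 1), ?_, ?_⟩
  · exact mul_ne_zero hs (pow_ne_zero _ (inv_ne_zero hu0))
  · rw [h, hn]
    have huv := mul_inv_cancel₀ hu0
    generalize (HahnSeries.single (1 : ℤ) (1 : F) : LaurentSeries F)⁻¹ = v at huv
    linear_combination (-(HahnSeries.C p.leadingCoeff * s ^ 2 * v ^ (2 * n + 1))) * huv

theorem binary_order_aux {F : Type*} [Field F] (c d : F) (hcd : ¬ IsSquare (-(c * d)))
    (y z : LaurentSeries F) (hy : y ≠ 0) (hz : z = 0 ∨ y.order ≤ z.order) :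
    HahnSeries.C c * y ^ 2 + HahnSeries.C d * z ^ 2 ≠ 0 ∧
      Even (HahnSeries.C c * y ^ 2 + HahnSeries.C d * z ^ 2).order := by
  obtain ⟨w, hw⟩ : ∃ w : PowerSeries F, z = y * HahnSeries.ofPowerSeries ℤ F w := by
    rcases eq_or_ne z 0 with h0 | h0
    · exact ⟨0, by simp [h0]⟩
    have hz := hz.resolve_left h0
    have hq0 : z / y ≠ 0 := div_ne_zero h0 hy
    have hzq : z = y * (z / y) := by field_simp
    have ho : z.order = y.order + (z / y).order := by
      conv_lhs => rw [hzq]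
      exact HahnSeries.order_mul hy hq0
    have h := LaurentSeries.single_order_mul_powerSeriesPart (z / y)
    obtain ⟨n, hn⟩ := Int.eq_ofNat_of_zero_le (show 0 ≤ (z / y).order by omega)
    refine ⟨PowerSeries.X ^ n * (z / y).powerSeriesPart, ?_⟩
    rw [map_mul, HahnSeries.ofPowerSeries_X_pow, ← hn, h]
    exact hzq
  set f : PowerSeries F := PowerSeries.C c + PowerSeries.C d * w ^ 2 with hf
  have hf0 : PowerSeries.constantCoeff f ≠ 0 := by
    intro h
    apply hcd
    simp [hf] at h
    refine ⟨d * PowerSeries.constantCoeff w, ?_⟩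
    linear_combination -d * h
  have hP : HahnSeries.C c * y ^ 2 + HahnSeries.C d * z ^ 2 =
      y * (y * HahnSeries.ofPowerSeries ℤ F f) := by
    rw [hw, hf]
    simp only [map_add, map_mul, map_pow, HahnSeries.ofPowerSeries_C]
    ring
  have hcoeff : (HahnSeries.ofPowerSeries ℤ F f).coeff 0 ≠ 0 := by
    have := HahnSeries.ofPowerSeries_apply_coeff (Γ := ℤ) f 0
    simp only [Nat.cast_zero] at this
    rw [this]
    simpa using hf0
  have hff : HahnSeries.ofPowerSeries ℤ F f ≠ 0 := by
    intro h
    rw [h] at hcoeff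
    simp at hcoeff
  have hord : (HahnSeries.ofPowerSeries ℤ F f).order = 0 := by
    apply le_antisymm (HahnSeries.order_le_of_coeff_ne_zero hcoeff)
    rw [HahnSeries.le_order_iff_forall hff]
    intro j hj
    rw [PowerSeries.coeff_coe, if_pos hj]
  rw [hP]
  refine ⟨mul_ne_zero hy (mul_ne_zero hy hff), ?_⟩
  rw [HahnSeries.order_mul hy (mul_ne_zero hy hff), HahnSeries.order_mul hy hff, hord]
  simp

theorem binary_order {F : Type*} [Field F] (c d : F) (hcd : ¬ IsSquare (-(c * d)))
    (y z : LaurentSeries F) (hyz : ¬ (y = 0 ∧ z = 0)) :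
    HahnSeries.C c * y ^ 2 + HahnSeries.C d * z ^ 2 ≠ 0 ∧
      Even (HahnSeries.C c * y ^ 2 + HahnSeries.C d * z ^ 2).order := by
  by_cases h : y ≠ 0 ∧ (z = 0 ∨ y.order ≤ z.order)
  · exact binary_order_aux c d hcd y z h.1 h.2
  · rw [add_comm]
    apply binary_order_aux d c (by rwa [mul_comm]) z y
    · rintro rfl; tauto
    · by_cases hy : y = 0
      · exact Or.inl hy
      · right
        by_contra hlt
        exact h ⟨hy, Or.inr (by omega)⟩

theorem quaternary_diag {F : Type*} [Field F] (c d e f : F) (hcd : ¬ IsSquare (-(c * d)))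
    (hef : ¬ IsSquare (-(e * f))) (y z v w : LaurentSeries F)
    (h : HahnSeries.C c * y ^ 2 + HahnSeries.C d * z ^ 2 + HahnSeries.single (1 : ℤ) (1 : F) *
      (HahnSeries.C e * v ^ 2 + HahnSeries.C f * w ^ 2) = 0) :
    (y = 0 ∧ z = 0) ∧ (v = 0 ∧ w = 0) := by
  have hu0 : (HahnSeries.single (1 : ℤ) (1 : F) : LaurentSeries F) ≠ 0 := by simp
  by_cases h1 : y = 0 ∧ z = 0
  · refine ⟨h1, ?_⟩
    by_contra h2
    have := (binary_order e f hef v w h2).1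
    rw [h1.1, h1.2] at h
    apply mul_ne_zero hu0 this
    simpa only [zero_pow two_ne_zero, mul_zero, zero_add, add_zero] using h
  · exfalso
    obtain ⟨hP, heP⟩ := binary_order c d hcd y z h1
    by_cases h2 : v = 0 ∧ w = 0
    · rw [h2.1, h2.2] at h
      apply hP
      simpa using h
    · obtain ⟨hQ, heQ⟩ := binary_order e f hef v w h2
      rw [eq_neg_of_add_eq_zero_left h, HahnSeries.order_neg, HahnSeries.order_mul hu0 hQ,
        HahnSeries.order_single one_ne_zero] at heP
      rw [Int.even_iff] at *
      omega

theorem binary_isotropic {F : Type*} [Field F] (c d : F) (hc : c ≠ 0)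
    (hcd : IsSquare (-(c * d))) (b : LaurentSeries F) (s t : LaurentSeries F)
    (hs : s ≠ 0) (ht : t ≠ 0) :
    ∃ y z : LaurentSeries F, z ≠ 0 ∧
      b * (HahnSeries.C c * s ^ 2) * y ^ 2 + b * (HahnSeries.C d * t ^ 2) * z ^ 2 = 0 := by
  obtain ⟨e, he⟩ := hcd
  refine ⟨HahnSeries.C e * s⁻¹, HahnSeries.C c * t⁻¹, ?_, ?_⟩
  · exact mul_ne_zero (by simpa using hc) (inv_ne_zero ht)
  · have he' : -(HahnSeries.C c * HahnSeries.C d) =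
        (HahnSeries.C e * HahnSeries.C e : LaurentSeries F) := by
      rw [← map_mul, ← map_mul, ← he, map_neg]
    field_simp
    linear_combination -b * HahnSeries.C c * he'

/-- for squarefree `a₁, a₂, a₃, a₄` with `aᵢ, aⱼ` of even degree and
`a_k, a_l` of odd degree, the quadratic form `a₁x₁² + a₂x₂² + a₃x₃² + a₄x₄²` has no
nontrivial zero over `𝔽((1/t))` iff `−cᵢcⱼ` and `−c_k c_l` are both non-squares in `𝔽`,
where `c_m` is the leading coefficient of `a_m`. -/
theorem quaternary_anisotropic_at_infinity_iff
    {F : Type*} [Field F] [Fintype F] (hodd : ringChar F ≠ 2)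
    (a : Fin 4 → F[X]) (ha : ∀ m, Squarefree (a m))
    (i j k l : Fin 4) (huniv : ({i, j, k, l} : Finset (Fin 4)) = Finset.univ)
    (hei : Even (a i).natDegree) (hej : Even (a j).natDegree)
    (hok : Odd (a k).natDegree) (hol : Odd (a l).natDegree) :
    (∀ x : Fin 4 → LaurentSeries F,
        ∑ m, polyToLaurentInfty F (a m) * x m ^ 2 = 0 → x = 0) ↔
      (¬ IsSquare (-((a i).leadingCoeff * (a j).leadingCoeff)) ∧
       ¬ IsSquare (-((a k).leadingCoeff * (a l).leadingCoeff))) := by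
  classical
  have h2 : (2 : F) ≠ 0 := Ring.two_ne_zero hodd
  have hne : ∀ m, a m ≠ 0 := fun m => (ha m).ne_zero
  have hcard : ({i, j, k, l} : Finset (Fin 4)).card = 4 := by rw [huniv]; rfl
  have hij : i ≠ j ∧ i ≠ k ∧ i ≠ l ∧ j ≠ k ∧ j ≠ l ∧ k ≠ l := by
    clear hei hej hok hol huniv
    revert i j k l
    decide
  obtain ⟨nij, nik, nil, njk, njl, nkl⟩ := hij
  have hsum : ∀ g : Fin 4 → LaurentSeries F, ∑ m, g m = g i + g j + (g k + g l) := by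
    intro g
    rw [← huniv, Finset.sum_insert (by simp [*]), Finset.sum_insert (by simp [*]),
      Finset.sum_insert (by simp [*]), Finset.sum_singleton]
    ring
  obtain ⟨si, hsi, ei⟩ := polyToLaurentInfty_even h2 (a i) (hne i) hei
  obtain ⟨sj, hsj, ej⟩ := polyToLaurentInfty_even h2 (a j) (hne j) hej
  obtain ⟨sk, hsk, ek⟩ := polyToLaurentInfty_odd h2 (a k) (hne k) hok
  obtain ⟨sl, hsl, el⟩ := polyToLaurentInfty_odd h2 (a l) (hne l) hol
  constructor
  · intro H
    constructor
    · intro hsq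
      obtain ⟨y, z, hz, hyz⟩ := binary_isotropic _ _ (leadingCoeff_ne_zero.2 (hne i)) hsq 1 si sj
        hsi hsj
      have := H (fun m => if m = i then y else if m = j then z else 0) (by
        rw [hsum]
        simp only [ei, ej, if_true, if_neg nij.symm, if_neg nik.symm, if_neg nil.symm,
          if_neg njk.symm, if_neg njl.symm]
        linear_combination hyz)
      have := congrFun this j
      simp [nij.symm, hz] at this
    · intro hsq
      obtain ⟨y, z, hz, hyz⟩ := binary_isotropic _ _ (leadingCoeff_ne_zero.2 (hne k)) hsq
        (HahnSeries.single (1 : ℤ) (1 : F)) sk sl hsk hsl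
      have := H (fun m => if m = k then y else if m = l then z else 0) (by
        rw [hsum]
        simp only [ek, el, if_true, if_neg nik, if_neg njk, if_neg nil,
          if_neg njl, if_neg nkl.symm]
        linear_combination hyz)
      have := congrFun this l
      simp [nkl.symm, hz] at this
  · rintro ⟨h1, h3⟩ x hx
    rw [hsum, ei, ej, ek, el] at hx
    obtain ⟨⟨hi, hj⟩, hk, hl⟩ := quaternary_diag _ _ _ _ h1 h3 (si * x i) (sj * x j) (sk * x k)
      (sl * x l) (by linear_combination hx)
    funext m
    have hm : m ∈ ({i, j, k, l} : Finset (Fin 4)) := by rw [huniv]; exact Finset.mem_univ m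
    simp only [Finset.mem_insert, Finset.mem_singleton] at hm
    rcases hm with rfl | rfl | rfl | rfl
    · exact (mul_eq_zero.1 hi).resolve_left hsi
    · exact (mul_eq_zero.1 hj).resolve_left hsj
    · exact (mul_eq_zero.1 hk).resolve_left hsk
    · exact (mul_eq_zero.1 hl).resolve_left hsl
end

section
/- Let a₁x₁² + a₂x₂² + a₃x₃² + a₄x₄² be a minimized diagonal quadratic form with coefficients in 𝔽[t] which is isotropic over 𝔽_q(t), and suppose that aᵢx² + aⱼy² is anisotropic over 𝔽_q(t) for every pair of indices i ≠ j. Let D = a₁a₂a₃a₄. Then there exist a permutation σ of {1,2,3,4}, an ε ∈ {0,1}, and a polynomial b ∈ 𝔽[t] coprime to D, such that for every monic irreducible a ∈ 𝔽[t] with a ≡ b (mod D) and deg(a) ≡ ε (mod 2), both of the following equations have solutions over 𝔽_q(t): a_{σ(1)}x² + a_{σ(2)}y² = P·a and −a_{σ(3)}z² − a_{σ(4)}w² = P·a, where P is the product of the monic gcd of a_{σ(1)} and a_{σ(2)} with the monic gcd of a_{σ(3)} and a_{σ(4)}. -/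
open Polynomial

/-- `g` is the monic greatest common divisor of `p` and `q`. -/
def IsMonicGcd {F : Type*} [Field F] (p q g : F[X]) : Prop :=
  g.Monic ∧ g ∣ p ∧ g ∣ q ∧ ∀ r : F[X], r ∣ p → r ∣ q → r ∣ g

/-- A diagonal quaternary quadratic form `a₁x₁² + a₂x₂² + a₃x₃² + a₄x₄²` with nonzero
coefficients `aᵢ ∈ 𝔽[t]` is minimized if: (1) each `aᵢ` is squarefree; (2) `a₁a₂a₃a₄` is
cubefree; (3) whenever a monic irreducible `f` does not divide `aᵢ` and `aⱼ` but divides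
the other two coefficients, `−aᵢaⱼ` is a square modulo `f`; (4) the number of square
leading coefficients among the `aᵢ` is at least the number of non-square ones. -/
def IsMinimized {F : Type*} [Field F] (a : Fin 4 → F[X]) : Prop :=
  (∀ m, a m ≠ 0) ∧
  (∀ m, Squarefree (a m)) ∧
  (∀ f : F[X], f.Monic → Irreducible f → ¬ f ^ 3 ∣ (a 0 * a 1 * a 2 * a 3)) ∧
  (∀ f : F[X], f.Monic → Irreducible f → ∀ i j k l : Fin 4,
      ({i, j, k, l} : Finset (Fin 4)) = Finset.univ →
      ¬ f ∣ a i → ¬ f ∣ a j → f ∣ a k → f ∣ a l →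
      IsSquare (Ideal.Quotient.mk (Ideal.span {f}) (-(a i * a j)))) ∧
  (Nat.card {m : Fin 4 // IsSquare ((a m).leadingCoeff)} ≥
    Nat.card {m : Fin 4 // ¬ IsSquare ((a m).leadingCoeff)})


def SqMod {F : Type*} [Field F] (f m : F[X]) : Prop := ∃ r : F[X], f ∣ r ^ 2 - m

section
variable {F : Type*} [Field F]

lemma res_right_deg (f g : F[X]) (hf : f.Monic) (n : ℕ) (hn : g.natDegree ≤ n) :
    resultant f g f.natDegree n = resultant f g := by
  obtain ⟨k, rfl⟩ := Nat.exists_eq_add_of_le hn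
  rw [resultant_add_right_deg _ _ _ _ _ le_rfl]
  simp [hf]

lemma res_congr (f g₁ g₂ : F[X]) (hf : f.Monic) (h : f ∣ g₁ - g₂) :
    resultant f g₁ = resultant f g₂ := by
  obtain ⟨k, hk⟩ := h
  have e : g₁ = g₂ + f * k := by rw [← hk]; ring
  set n := g₁.natDegree + g₂.natDegree + k.natDegree + f.natDegree
  rw [← res_right_deg f g₁ hf n (by omega), ← res_right_deg f g₂ hf n (by omega), e,
    resultant_add_mul_right _ _ _ _ _ (by omega) le_rfl]

lemma res_mul_right (f g₁ g₂ : F[X]) (h₁ : g₁ ≠ 0) (h₂ : g₂ ≠ 0) :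
    resultant f (g₁ * g₂) = resultant f g₁ * resultant f g₂ := by
  rw [natDegree_mul h₁ h₂, resultant_mul_right _ _ _ _ le_rfl]

lemma res_mul_left (f g₁ g₂ : F[X]) (h₁ : g₁ ≠ 0) (h₂ : g₂ ≠ 0) :
    resultant (g₁ * g₂) f = resultant g₁ f * resultant g₂ f := by
  rw [natDegree_mul h₁ h₂, resultant_mul_left _ _ _ _ le_rfl]

lemma res_sq_of_sqMod (f m : F[X]) (hf : f.Monic) (h : SqMod f m) :
    IsSquare (resultant f m) := by
  obtain ⟨r, hr⟩ := h
  rw [← res_congr f _ _ hf hr]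
  by_cases h0 : r = 0
  · subst h0
    simp only [ne_eq, OfNat.ofNat_ne_zero, not_false_eq_true, zero_pow]
    by_cases hd : f.natDegree = 0
    · rw [hf.natDegree_eq_zero.mp hd]; simp
    · simp [hd]
  · rw [pow_two, res_mul_right _ _ _ h0 h0]
    exact ⟨_, rfl⟩

lemma norm_eq_res [Fintype F] (f g : F[X]) (hf : f.Monic) (hi : Irreducible f) :
    have := Fact.mk hi
    Algebra.norm F (AdjoinRoot.mk f g) = resultant f g := by
  have := Fact.mk hi
  have hsep : f.Separable := PerfectField.separable_of_irreducible hi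
  let pb := AdjoinRoot.powerBasis hi.ne_zero
  have hmin : minpoly F pb.gen = f := by
    have := AdjoinRoot.minpoly_root hi.ne_zero
    rw [hf.leadingCoeff] at this
    simpa [pb] using this
  have : FiniteDimensional F (AdjoinRoot f) := pb.finite
  have : Algebra.IsSeparable F (AdjoinRoot f) := inferInstance
  let E := AlgebraicClosure F
  apply (algebraMap F E).injective
  rw [Algebra.norm_eq_prod_embeddings]
  rw [← resultant_map_map, ← hf.natDegree_map (algebraMap F E), resultant_eq_prod_eval _ _ _ natDegree_map_le (IsAlgClosed.splits _)]
  rw [(hf.map _).leadingCoeff, one_pow, one_mul]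
  classical
  rw [@Fintype.prod_equiv (AdjoinRoot f →ₐ[F] E) _ _ _ _ _ pb.liftEquiv'
    (fun σ => σ (AdjoinRoot.mk f g)) (fun x => (g.map (algebraMap F E)).eval x.1) ?_]
  · rw [Finset.prod_mem_multiset (f := fun x => (g.map (algebraMap F E)).eval x.1) (g := fun x => (g.map (algebraMap F E)).eval x) (hfg := fun _ => rfl), Finset.prod_eq_multiset_prod, Multiset.toFinset_val,
      Multiset.dedup_eq_self.mpr, hmin]
    · rw [hmin]; exact nodup_roots (hsep.map)
  · intro σ
    simp only [PowerBasis.liftEquiv'_apply_coe]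
    rw [eval_map_algebraMap, ← AdjoinRoot.aeval_eq, ← aeval_algHom_apply]
    rfl

lemma sqMod_of_res [Fintype F] (hodd : ringChar F ≠ 2) (f g : F[X]) (hf : f.Monic) (hi : Irreducible f) (hg : ¬ f ∣ g)
    (h : IsSquare (resultant f g)) : SqMod f g := by
  have := Fact.mk hi
  rw [← norm_eq_res f g hf hi] at h
  have : FiniteDimensional F (AdjoinRoot f) := (AdjoinRoot.powerBasis hi.ne_zero).finite
  have : Finite (AdjoinRoot f) := Module.finite_of_finite F
  let := Fintype.ofFinite (AdjoinRoot f)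
  have hx : AdjoinRoot.mk f g ≠ 0 := by rwa [Ne, AdjoinRoot.mk_eq_zero]
  set x := AdjoinRoot.mk f g with hxd
  have hchar : ringChar (AdjoinRoot f) ≠ 2 := by
    rwa [← Algebra.ringChar_eq F (AdjoinRoot f)]
  have hsq : IsSquare x := by
    rw [FiniteField.isSquare_iff hchar hx]
    have hN : Algebra.norm F x ≠ 0 := by rwa [Ne, Algebra.norm_eq_zero_iff]
    rw [FiniteField.isSquare_iff hodd hN] at h
    have h2 := congrArg (algebraMap F (AdjoinRoot f)) h
    rw [map_pow, FiniteField.algebraMap_norm_eq_pow, map_one, ← pow_mul] at h2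
    convert h2 using 2
    rw [Nat.card_eq_fintype_card, Nat.card_eq_fintype_card]
    have h1 := FiniteField.odd_card_of_char_ne_two hodd
    have h3 := FiniteField.odd_card_of_char_ne_two hchar
    have h4 : (Fintype.card F - 1) ∣ (Fintype.card (AdjoinRoot f) - 1) := by
      rw [Module.card_eq_pow_finrank (K := F) (V := AdjoinRoot f)]
      simpa using Nat.sub_dvd_pow_sub_pow (Fintype.card F) 1 (Module.finrank F (AdjoinRoot f))
    obtain ⟨k, hk⟩ := h4
    have hc : 1 < Fintype.card F := Fintype.one_lt_card
    obtain ⟨u, hu⟩ : ∃ u, Fintype.card F = 2 * u + 1 := ⟨Fintype.card F / 2, by omega⟩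
    have hu0 : 0 < u := by omega
    rw [hk, Nat.mul_div_cancel_left _ (by omega), hu]
    have : (2 * u + 1) / 2 = u := by omega
    rw [this]
    rw [hu] at hk
    have h5 : Fintype.card (AdjoinRoot f) = 2 * (k * u) + 1 := by
      have : (2 * u + 1 - 1) * k = 2 * (k * u) := by simp; ring
      have h0 : 0 < Fintype.card (AdjoinRoot f) := Fintype.card_pos
      omega
    omega
  obtain ⟨y, hy⟩ := hsq
  obtain ⟨r, rfl⟩ := AdjoinRoot.mk_surjective y
  refine ⟨r, ?_⟩
  rw [← AdjoinRoot.mk_eq_zero, map_sub, map_pow, ← hxd, hy]; ring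
end

/-- solvability condition at infinity -/
def InfC {F : Type*} [Field F] (α β : F) (dA dB dC : ℕ) : Prop :=
  (dA % 2 = dC % 2 ∧ IsSquare α) ∨ (dB % 2 = dC % 2 ∧ IsSquare β) ∨
  (dA % 2 = dB % 2 ∧ IsSquare (-(α * β))) ∨ (dA % 2 = dB % 2 ∧ dB % 2 = dC % 2)

section
variable {F : Type*} [Field F]

lemma SqMod.of_dvd {f g m : F[X]} (h : SqMod f m) (hd : g ∣ f) : SqMod g m := by
  obtain ⟨r, hr⟩ := h
  exact ⟨r, hd.trans hr⟩

lemma SqMod.mul {f g m : F[X]} (hf : SqMod f m) (hg : SqMod g m) (hc : IsCoprime f g) :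
    SqMod (f * g) m := by
  obtain ⟨r, hr⟩ := hf
  obtain ⟨s, hs⟩ := hg
  have hc' := hc
  obtain ⟨u, v, huv⟩ := hc'
  refine ⟨r * (v * g) + s * (u * f), hc.mul_dvd ?_ ?_⟩
  · have e : (r * (v * g) + s * (u * f)) = r + f * (u * (s - r)) := by
      linear_combination r * huv
    rw [e]
    have : (r + f * (u * (s - r))) ^ 2 - m = (r ^ 2 - m) + f * (2 * r * (u * (s - r)) + f * (u * (s - r)) ^ 2) := by ring
    rw [this]; exact dvd_add hr (dvd_mul_right _ _)
  · have e : (r * (v * g) + s * (u * f)) = s + g * (v * (r - s)) := by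
      linear_combination s * huv
    rw [e]
    have : (s + g * (v * (r - s))) ^ 2 - m = (s ^ 2 - m) + g * (2 * s * (v * (r - s)) + g * (v * (r - s)) ^ 2) := by ring
    rw [this]; exact dvd_add hs (dvd_mul_right _ _)

lemma SqMod.of_primes {f m : F[X]} (hf : Squarefree f) (h0 : f ≠ 0)
    (h : ∀ g : F[X], g.Monic → Irreducible g → g ∣ f → SqMod g m) : SqMod f m := by
  classical
  induction f using UniqueFactorizationMonoid.induction_on_prime with
  | h₁ => exact absurd rfl h0
  | h₂ x hx => exact ⟨0, hx.dvd⟩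
  | h₃ a p ha hp ih =>
    have h1 : SqMod p m := by
      have := h (normalize p) (monic_normalize hp.ne_zero) ((normalize_associated p).irreducible_iff.mpr hp.irreducible)
        (by rw [normalize_dvd_iff]; exact dvd_mul_right _ _)
      exact this.of_dvd (by rw [dvd_normalize_iff])
    have h2 : SqMod a m := ih hf.of_mul_right ha
      (fun g hg hi hga => h g hg hi (hga.trans (dvd_mul_left _ _)))
    refine h1.mul h2 ?_
    rw [hp.irreducible.coprime_iff_not_dvd]
    intro hd
    have : p * p ∣ p * a := mul_dvd_mul_left p hd
    exact hp.not_isUnit (hf p this)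

lemma recip_signs (m u v ab ah ap bh bp : ℤ) (da db dh dp : ℕ)
    (hm : m ^ 2 = 1) (hu : u ^ 2 = 1) (hv : v ^ 2 = 1) (hab : ab ^ 2 = 1) (hah : ah ^ 2 = 1)
    (hap : ap ^ 2 = 1) (hbh : bh ^ 2 = 1) (hbp : bp ^ 2 = 1)
    (h1 : v ^ da * ab * ah * ap = 1)
    (h2 : u ^ db * (m ^ (db * da) * ab) * bh * bp = 1)
    (h3 : (m * u * v) ^ dh * (m ^ (dh * da) * ah) * (m ^ (dh * db) * bh) = 1)
    (hinf : (da % 2 = (dh + dp) % 2 ∧ u = 1) ∨ (db % 2 = (dh + dp) % 2 ∧ v = 1) ∨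
      (da % 2 = db % 2 ∧ m * u * v = 1) ∨ (da % 2 = db % 2 ∧ db % 2 = (dh + dp) % 2)) :
    (m * u * v) ^ dp * (m ^ (dp * da) * ap) * (m ^ (dp * db) * bp) = 1 := by
  have hmuv : (m * u * v) ^ 2 = 1 := by rw [mul_pow, mul_pow, hm, hu, hv]; rfl
  have key : ∀ (x : ℤ), x ^ 2 = 1 → ∀ n : ℕ, x ^ n = if n % 2 = 0 then 1 else x := by
    intro x hx n
    rw [← Nat.div_add_mod n 2, pow_add, pow_mul, hx, one_pow, one_mul]
    rcases Nat.mod_two_eq_zero_or_one n with h | h <;> simp [h, Nat.add_mod]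
  simp only [key v hv, key u hu, key m hm, key _ hmuv] at h1 h2 h3 ⊢
  rcases Nat.mod_two_eq_zero_or_one da with hda | hda <;>
  rcases Nat.mod_two_eq_zero_or_one db with hdb | hdb <;>
  rcases Nat.mod_two_eq_zero_or_one dh with hdh | hdh <;>
  rcases Nat.mod_two_eq_zero_or_one dp with hdp | hdp <;>
  simp [hda, hdb, hdh, hdp, Nat.mul_mod, Nat.add_mod] at h1 h2 h3 hinf ⊢ <;> grind

open Classical in
lemma recip [Fintype F] (hodd : ringChar F ≠ 2) (A B h p : F[X]) (hA : A ≠ 0) (hB : B ≠ 0)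
    (hh : h.Monic) (hp : p.Monic) (hpi : Irreducible p)
    (cAB : IsCoprime A B) (cAh : IsCoprime A h) (cAp : IsCoprime A p)
    (cBh : IsCoprime B h) (cBp : IsCoprime B p)
    (s1 : SqMod A (B * h * p)) (s2 : SqMod B (A * h * p)) (s3 : SqMod h (-(A * B)))
    (hinf : InfC A.leadingCoeff B.leadingCoeff A.natDegree B.natDegree (h.natDegree + p.natDegree)) :
    SqMod p (-(A * B)) := by
  have hα : A.leadingCoeff ≠ 0 := leadingCoeff_ne_zero.mpr hA
  have hβ : B.leadingCoeff ≠ 0 := leadingCoeff_ne_zero.mpr hB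
  obtain ⟨α, hαe⟩ : ∃ α, α = A.leadingCoeff := ⟨_, rfl⟩
  obtain ⟨β, hβe⟩ : ∃ β, β = B.leadingCoeff := ⟨_, rfl⟩
  rw [← hαe] at hα hinf
  rw [← hβe] at hβ hinf
  obtain ⟨A', hA'⟩ : ∃ A' : F[X], A' = C α⁻¹ * A := ⟨_, rfl⟩
  obtain ⟨B', hB'⟩ : ∃ B' : F[X], B' = C β⁻¹ * B := ⟨_, rfl⟩
  have mA : A'.Monic := by
    rw [Monic, hA', leadingCoeff_mul, leadingCoeff_C, ← hαe, inv_mul_cancel₀ hα]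
  have mB : B'.Monic := by
    rw [Monic, hB', leadingCoeff_mul, leadingCoeff_C, ← hβe, inv_mul_cancel₀ hβ]
  have eA : A = C α * A' := by
    rw [hA', ← mul_assoc, ← C_mul, mul_inv_cancel₀ hα, C_1, one_mul]
  have eB : B = C β * B' := by
    rw [hB', ← mul_assoc, ← C_mul, mul_inv_cancel₀ hβ, C_1, one_mul]
  have dA : A.natDegree = A'.natDegree := by rw [eA, natDegree_C_mul hα]
  have dB : B.natDegree = B'.natDegree := by rw [eB, natDegree_C_mul hβ]
  have A'A : A' ∣ A := ⟨C α, by rw [eA]; ring⟩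
  have B'B : B' ∣ B := ⟨C β, by rw [eB]; ring⟩
  have cAB' : IsCoprime A' B' := (cAB.of_isCoprime_of_dvd_left A'A).of_isCoprime_of_dvd_right B'B
  have cAh' : IsCoprime A' h := (cAh.of_isCoprime_of_dvd_left A'A)
  have cAp' : IsCoprime A' p := (cAp.of_isCoprime_of_dvd_left A'A)
  have cBh' : IsCoprime B' h := (cBh.of_isCoprime_of_dvd_left B'B)
  have cBp' : IsCoprime B' p := (cBp.of_isCoprime_of_dvd_left B'B)
  have nA := mA.ne_zero
  have nB := mB.ne_zero
  have nh := hh.ne_zero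
  have np := hp.ne_zero
  have nCα : (C α : F[X]) ≠ 0 := by simpa using hα
  have nCβ : (C β : F[X]) ≠ 0 := by simpa using hβ
  let χ := quadraticChar F
  have χsq : ∀ x : F, x ≠ 0 → χ x ^ 2 = 1 := fun x hx => quadraticChar_sq_one hx
  have χ1 : ∀ x : F, x ≠ 0 → IsSquare x → χ x = 1 :=
    fun x hx h => (quadraticChar_one_iff_isSquare hx).mpr h
  have resC : ∀ (f : F[X]) (c : F), resultant f (C c) = c ^ f.natDegree := by
    intro f c; simp
  have cNeg : ∀ f : F[X], resultant f (-(A * B)) =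
      (-1 * α * β) ^ f.natDegree * resultant f A' * resultant f B' := by
    intro f
    have : -(A * B) = C (-1 * α * β) * (A' * B') := by
      rw [eA, eB]; simp only [C_mul, C_neg, C_1]; ring
    rw [this, res_mul_right _ _ _ (by simp [hα, hβ]) (mul_ne_zero nA nB), resC, res_mul_right _ _ _ nA nB]; ring
  have comm : ∀ f g : F[X], χ (resultant f g) = χ (-1) ^ (f.natDegree * g.natDegree) * χ (resultant g f) := by
    intro f g
    rw [resultant_comm, map_mul, map_pow]
  have rn : ∀ f g : F[X], IsCoprime f g → resultant f g ≠ 0 := fun f g h => resultant_ne_zero f g h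
  have q1 : χ β ^ A'.natDegree * χ (resultant A' B') * χ (resultant A' h) * χ (resultant A' p) = 1 := by
    have e : resultant A' (B * h * p) = β ^ A'.natDegree * resultant A' B' * resultant A' h * resultant A' p := by
      rw [res_mul_right _ _ _ (mul_ne_zero hB nh) np, res_mul_right _ _ _ hB nh, eB,
        res_mul_right _ _ _ nCβ nB, resC]
    have := χ1 _ (by rw [e]; simp [hβ, rn _ _ cAB', rn _ _ cAh', rn _ _ cAp']) (res_sq_of_sqMod _ _ mA (s1.of_dvd A'A))
    rw [e] at this
    simpa only [map_mul, map_pow] using this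
  have q2 : χ α ^ B'.natDegree * (χ (-1) ^ (B'.natDegree * A'.natDegree) * χ (resultant A' B')) * χ (resultant B' h) * χ (resultant B' p) = 1 := by
    have e : resultant B' (A * h * p) = α ^ B'.natDegree * resultant B' A' * resultant B' h * resultant B' p := by
      rw [res_mul_right _ _ _ (mul_ne_zero hA nh) np, res_mul_right _ _ _ hA nh, eA,
        res_mul_right _ _ _ nCα nA, resC]
    have := χ1 _ (by rw [e]; simp [hα, rn _ _ cAB'.symm, rn _ _ cBh', rn _ _ cBp']) (res_sq_of_sqMod _ _ mB (s2.of_dvd B'B))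
    rw [e] at this
    rw [← comm]
    simpa only [map_mul, map_pow] using this
  have q3 : (χ (-1) * χ α * χ β) ^ h.natDegree * (χ (-1) ^ (h.natDegree * A'.natDegree) * χ (resultant A' h)) *
      (χ (-1) ^ (h.natDegree * B'.natDegree) * χ (resultant B' h)) = 1 := by
    have e := cNeg h
    have := χ1 _ (by rw [e]; simp [hα, hβ, rn _ _ cAh'.symm, rn _ _ cBh'.symm]) (res_sq_of_sqMod _ _ hh s3)
    rw [e] at this
    rw [← comm, ← comm]
    simpa only [map_mul, map_pow] using this
  have hres : χ (resultant p (-(A * B))) = 1 := by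
    rw [cNeg, map_mul, map_mul, map_pow, map_mul, map_mul, comm p, comm p]
    refine recip_signs (χ (-1)) (χ α) (χ β) (χ (resultant A' B')) (χ (resultant A' h)) (χ (resultant A' p))
      (χ (resultant B' h)) (χ (resultant B' p)) A'.natDegree B'.natDegree h.natDegree p.natDegree
      (χsq _ (by simp)) (χsq _ hα) (χsq _ hβ) (χsq _ (rn _ _ cAB')) (χsq _ (rn _ _ cAh')) (χsq _ (rn _ _ cAp'))
      (χsq _ (rn _ _ cBh')) (χsq _ (rn _ _ cBp')) q1 q2 q3 ?_
    rw [InfC, dA, dB] at hinf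
    refine hinf.imp (fun h => ⟨h.1, χ1 _ hα h.2⟩) (Or.imp (fun h => ⟨h.1, χ1 _ hβ h.2⟩) (Or.imp (fun h => ⟨h.1, ?_⟩) id))
    have := χ1 _ (by simp [hα, hβ]) h.2
    rw [← map_mul, ← map_mul]
    convert this using 2
    ring
  have hnd : ¬ p ∣ -(A * B) := by
    rw [dvd_neg]
    intro hd
    rcases hpi.prime.dvd_or_dvd hd with h | h
    · exact hpi.not_isUnit (cAp.isUnit_of_dvd' h dvd_rfl)
    · exact hpi.not_isUnit (cBp.isUnit_of_dvd' h dvd_rfl)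
  apply sqMod_of_res hodd _ _ hp hpi hnd
  have hne : resultant p (-(A * B)) ≠ 0 := by
    intro h0; rw [h0] at hres; simp [χ] at hres
  exact (quadraticChar_one_iff_isSquare hne).mp hres
end

section
variable {F : Type*} [Field F]

lemma dvd_of_lin {A B C r y z : F[X]} (hc : IsCoprime A B) (hr : A ∣ r ^ 2 - -(B * C))
    (h : A ∣ B * y - r * z) : A ∣ B * y ^ 2 + C * z ^ 2 := by
  apply hc.dvd_of_dvd_mul_left
  have : B * (B * y ^ 2 + C * z ^ 2) = (B * y - r * z) * (B * y + r * z) + (r ^ 2 - -(B * C)) * z ^ 2 := by ring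
  rw [this]
  exact dvd_add (h.mul_right _) (hr.mul_right _)

lemma legendre_generic (A B C : F[X]) (hA : A ≠ 0) (hB : B ≠ 0) (hC : C ≠ 0)
    (cAB : IsCoprime A B) (cAC : IsCoprime A C) (cBC : IsCoprime B C)
    (s1 : SqMod A (-(B * C))) (s2 : SqMod B (-(C * A))) (s3 : SqMod C (-(A * B)))
    (k l m : ℕ) (x0 y0 z0 : F) (h0 : x0 ≠ 0 ∨ y0 ≠ 0 ∨ z0 ≠ 0)
    (hsum : k + l + m = A.natDegree + B.natDegree + C.natDegree)
    (hval : ∀ (x y z : F[X]) (s : F), x.degree < k → y.degree < l → z.degree < m →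
      A * (x + s • (x0 • X ^ k)) ^ 2 + B * (y + s • (y0 • X ^ l)) ^ 2 + C * (z + s • (z0 • X ^ m)) ^ 2 ≠ 0 →
      (A * (x + s • (x0 • X ^ k)) ^ 2 + B * (y + s • (y0 • X ^ l)) ^ 2 + C * (z + s • (z0 • X ^ m)) ^ 2).natDegree <
        A.natDegree + B.natDegree + C.natDegree) :
    ∃ x y z : F[X], (x ≠ 0 ∨ y ≠ 0 ∨ z ≠ 0) ∧ A * x ^ 2 + B * y ^ 2 + C * z ^ 2 = 0 := by
  obtain ⟨r, hr⟩ := s1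
  obtain ⟨s, hs⟩ := s2
  obtain ⟨t, ht⟩ := s3
  let W := degreeLT F k × degreeLT F l × degreeLT F m × F
  let fs : W →ₗ[F] F := LinearMap.snd F _ _ ∘ₗ LinearMap.snd F _ _ ∘ₗ LinearMap.snd F _ _
  let fx : W →ₗ[F] F[X] := (degreeLT F k).subtype ∘ₗ LinearMap.fst F _ _ +
    LinearMap.toSpanSingleton F F[X] (x0 • X ^ k) ∘ₗ fs
  let fy : W →ₗ[F] F[X] := (degreeLT F l).subtype ∘ₗ LinearMap.fst F _ _ ∘ₗ LinearMap.snd F _ _ +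
    LinearMap.toSpanSingleton F F[X] (y0 • X ^ l) ∘ₗ fs
  let fz : W →ₗ[F] F[X] := (degreeLT F m).subtype ∘ₗ LinearMap.fst F _ _ ∘ₗ LinearMap.snd F _ _ ∘ₗ LinearMap.snd F _ _ +
    LinearMap.toSpanSingleton F F[X] (z0 • X ^ m) ∘ₗ fs
  let qA := (Ideal.Quotient.mkₐ F (Ideal.span {A})).toLinearMap
  let qB := (Ideal.Quotient.mkₐ F (Ideal.span {B})).toLinearMap
  let qC := (Ideal.Quotient.mkₐ F (Ideal.span {C})).toLinearMap
  let mu : F[X] → (F[X] →ₗ[F] F[X]) := fun a => LinearMap.mulLeft F a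
  let Φ : W →ₗ[F] (F[X] ⧸ Ideal.span {A}) × (F[X] ⧸ Ideal.span {B}) × (F[X] ⧸ Ideal.span {C}) :=
    (qA ∘ₗ (mu B ∘ₗ fy - mu r ∘ₗ fz)).prod ((qB ∘ₗ (mu C ∘ₗ fz - mu s ∘ₗ fx)).prod
      (qC ∘ₗ (mu A ∘ₗ fx - mu t ∘ₗ fy)))
  have fd : ∀ n, FiniteDimensional F (degreeLT F n) := fun n =>
    Module.Finite.equiv (degreeLTEquiv F n).symm
  have fr : ∀ n, Module.finrank F (degreeLT F n) = n := fun n => by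
    rw [(degreeLTEquiv F n).finrank_eq]; simp
  have fq : ∀ f : F[X], f ≠ 0 → FiniteDimensional F (F[X] ⧸ Ideal.span {f}) := fun f hf =>
    (AdjoinRoot.powerBasis hf).finite
  have := fd k
  have := fd l
  have := fd m
  have := fq A hA
  have := fq B hB
  have := fq C hC
  have hlt : Module.finrank F ((F[X] ⧸ Ideal.span {A}) × (F[X] ⧸ Ideal.span {B}) × (F[X] ⧸ Ideal.span {C})) < Module.finrank F W := by
    simp only [W, Module.finrank_prod, fr, finrank_quotient_span_eq_natDegree, Module.finrank_self]
    omega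
  have hker := LinearMap.ker_ne_bot_of_finrank_lt (f := Φ) hlt
  obtain ⟨w, hw, hw0⟩ := (Submodule.ne_bot_iff _).mp hker
  have hΦ : Φ w = 0 := hw
  have ha : A ∣ B * fy w - r * fz w := by
    have := congrArg Prod.fst hΦ
    exact Ideal.mem_span_singleton.mp (Ideal.Quotient.eq_zero_iff_mem.mp this)
  have hb : B ∣ C * fz w - s * fx w := by
    have := congrArg (fun u => u.2.1) hΦ
    exact Ideal.mem_span_singleton.mp (Ideal.Quotient.eq_zero_iff_mem.mp this)
  have hc : C ∣ A * fx w - t * fy w := by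
    have := congrArg (fun u => u.2.2) hΦ
    exact Ideal.mem_span_singleton.mp (Ideal.Quotient.eq_zero_iff_mem.mp this)
  have ex : fx w = w.1.1 + w.2.2.2 • (x0 • X ^ k) := rfl
  have ey : fy w = w.2.1.1 + w.2.2.2 • (y0 • X ^ l) := rfl
  have ez : fz w = w.2.2.1.1 + w.2.2.2 • (z0 • X ^ m) := rfl
  have h1 := dvd_of_lin cAB hr ha
  have h2 := dvd_of_lin cBC hs hb
  have h3 := dvd_of_lin cAC.symm ht hc
  have dx : w.1.1.degree < k := mem_degreeLT.mp w.1.2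
  have dy : w.2.1.1.degree < l := mem_degreeLT.mp w.2.1.2
  have dz : w.2.2.1.1.degree < m := mem_degreeLT.mp w.2.2.1.2
  have hdvd : A * B * C ∣ A * fx w ^ 2 + B * fy w ^ 2 + C * fz w ^ 2 := by
    apply IsCoprime.mul_dvd (cAC.mul_left cBC)
    · apply cAB.mul_dvd
      · rw [add_assoc]; exact dvd_add (dvd_mul_right _ _) h1
      · have : A * fx w ^ 2 + B * fy w ^ 2 + C * fz w ^ 2 = B * fy w ^ 2 + (C * fz w ^ 2 + A * fx w ^ 2) := by ring
        rw [this]; exact dvd_add (dvd_mul_right _ _) h2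
    · exact dvd_add h3 (dvd_mul_right _ _)
  refine ⟨fx w, fy w, fz w, ?_, ?_⟩
  · by_contra hcon
    push Not at hcon
    obtain ⟨hx, hy, hz⟩ := hcon
    apply hw0
    have lead : ∀ (u : F[X]) (n : ℕ) (c d : F), u.degree < n → u + d • (c • X ^ n) = 0 → d * c = 0 := by
      intro u n c d hu he
      have := congrArg (fun p => p.coeff n) he
      simpa [coeff_eq_zero_of_degree_lt hu] using this
    have l1 := lead _ _ _ _ dx (ex ▸ hx)
    have l2 := lead _ _ _ _ dy (ey ▸ hy)
    have l3 := lead _ _ _ _ dz (ez ▸ hz)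
    have hs0 : w.2.2.2 = 0 := by
      rcases h0 with h | h | h
      · exact (mul_eq_zero.mp l1).resolve_right h
      · exact (mul_eq_zero.mp l2).resolve_right h
      · exact (mul_eq_zero.mp l3).resolve_right h
    rw [ex, hs0, zero_smul, add_zero] at hx
    rw [ey, hs0, zero_smul, add_zero] at hy
    rw [ez, hs0, zero_smul, add_zero] at hz
    exact Prod.ext (Subtype.ext hx) (Prod.ext (Subtype.ext hy) (Prod.ext (Subtype.ext hz) hs0))
  · by_contra hne
    have hv := hval _ _ _ w.2.2.2 dx dy dz (by rw [← ex, ← ey, ← ez]; exact hne)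
    rw [← ex, ← ey, ← ez] at hv
    have := natDegree_le_of_dvd hdvd hne
    rw [natDegree_mul (mul_ne_zero hA hB) hC, natDegree_mul hA hB] at this
    omega

lemma term_deg {A x : F[X]} {k : ℕ} (hx : x.degree < k) : A * x ^ 2 = 0 ∨
    (A * x ^ 2).natDegree + 2 ≤ A.natDegree + 2 * k := by
  by_cases h : x = 0
  · left; simp [h]
  · right
    have h1 : x.natDegree < k := (natDegree_lt_iff_degree_lt h).mpr hx
    have h2 : (A * x ^ 2).natDegree ≤ A.natDegree + 2 * x.natDegree :=
      natDegree_mul_le.trans (by rw [natDegree_pow])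
    omega

lemma nat_le_of_deg {x : F[X]} {k : ℕ} (c : F) (hx : x.degree < k) : (x + c • X ^ k).natDegree ≤ k := by
  apply natDegree_le_iff_degree_le.mpr
  refine (degree_add_le _ _).trans (max_le hx.le ?_)
  exact (degree_smul_le _ _).trans (degree_X_pow_le k)

lemma term_deg' (A : F[X]) {x : F[X]} {k : ℕ} (c : F) (hx : x.degree < k) :
    (A * (x + c • X ^ k) ^ 2).natDegree ≤ A.natDegree + 2 * k := by
  have := nat_le_of_deg c hx
  refine natDegree_mul_le.trans ?_
  rw [natDegree_pow]
  omega

lemma term_coeff (A : F[X]) {x : F[X]} {k n : ℕ} (c : F) (hx : x.degree < k) (hn : A.natDegree + 2 * k = n) :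
    (A * (x + c • X ^ k) ^ 2).coeff n = A.leadingCoeff * c ^ 2 := by
  have := nat_le_of_deg c hx
  rw [← hn, coeff_mul_add_eq_of_natDegree_le le_rfl (natDegree_pow_le_of_le 2 this), coeff_pow_of_natDegree_le this]
  simp [coeff_eq_zero_of_degree_lt hx]

/-- mixed parity case -/
lemma legendre_mixed (A B C : F[X]) (hA : A ≠ 0) (hB : B ≠ 0) (hC : C ≠ 0)
    (cAB : IsCoprime A B) (cAC : IsCoprime A C) (cBC : IsCoprime B C)
    (s1 : SqMod A (-(B * C))) (s2 : SqMod B (-(C * A))) (s3 : SqMod C (-(A * B)))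
    (hab : A.natDegree % 2 = B.natDegree % 2) (hac : A.natDegree % 2 ≠ C.natDegree % 2) :
    ∃ x y z : F[X], (x ≠ 0 ∨ y ≠ 0 ∨ z ≠ 0) ∧ A * x ^ 2 + B * y ^ 2 + C * z ^ 2 = 0 := by
  refine legendre_generic A B C hA hB hC cAB cAC cBC s1 s2 s3 ((B.natDegree + C.natDegree - 1) / 2)
    ((A.natDegree + C.natDegree + 1) / 2) ((A.natDegree + B.natDegree) / 2) 1 0 0 (Or.inl one_ne_zero) (by omega) ?_
  intro x y z s hx hy hz _
  simp only [zero_smul, smul_zero, add_zero, one_smul]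
  have t1 := term_deg' A s hx
  have t2 := term_deg (A := B) hy
  have t3 := term_deg (A := C) hz
  have t2' : (B * y ^ 2).natDegree ≤ A.natDegree + B.natDegree + C.natDegree - 1 := by
    rcases t2 with h | h
    · rw [h]; simp
    · omega
  have t3' : (C * z ^ 2).natDegree ≤ A.natDegree + B.natDegree + C.natDegree - 1 := by
    rcases t3 with h | h
    · rw [h]; simp
    · omega
  have : (A * (x + s • X ^ ((B.natDegree + C.natDegree - 1) / 2)) ^ 2 + B * y ^ 2 + C * z ^ 2).natDegree ≤
      A.natDegree + B.natDegree + C.natDegree - 1 :=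
    natDegree_add_le_of_degree_le (natDegree_add_le_of_degree_le (by omega) t2') t3'
  omega

lemma legendre_same [Fintype F] (hodd : ringChar F ≠ 2) (A B C : F[X]) (hA : A ≠ 0) (hB : B ≠ 0) (hC : C ≠ 0)
    (cAB : IsCoprime A B) (cAC : IsCoprime A C) (cBC : IsCoprime B C)
    (s1 : SqMod A (-(B * C))) (s2 : SqMod B (-(C * A))) (s3 : SqMod C (-(A * B)))
    (hab : A.natDegree % 2 = B.natDegree % 2) (hac : A.natDegree % 2 = C.natDegree % 2) :
    ∃ x y z : F[X], (x ≠ 0 ∨ y ≠ 0 ∨ z ≠ 0) ∧ A * x ^ 2 + B * y ^ 2 + C * z ^ 2 = 0 := by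
  obtain ⟨x0, y0, h0⟩ : ∃ x0 y0 : F, A.leadingCoeff * x0 ^ 2 + (B.leadingCoeff * y0 ^ 2 + C.leadingCoeff) = 0 := by
    have hα := leadingCoeff_ne_zero.mpr hA
    have hβ := leadingCoeff_ne_zero.mpr hB
    obtain ⟨x, y, h⟩ := FiniteField.exists_root_sum_quadratic
      (f := Polynomial.C A.leadingCoeff * X ^ 2 + Polynomial.C 0 * X + Polynomial.C 0)
      (g := Polynomial.C B.leadingCoeff * X ^ 2 + Polynomial.C 0 * X + Polynomial.C C.leadingCoeff)
      (degree_quadratic hα) (degree_quadratic hβ) (FiniteField.odd_card_of_char_ne_two hodd)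
    exact ⟨x, y, by simpa using h⟩
  refine legendre_generic A B C hA hB hC cAB cAC cBC s1 s2 s3 ((B.natDegree + C.natDegree) / 2)
    ((A.natDegree + C.natDegree) / 2) ((A.natDegree + B.natDegree) / 2) x0 y0 1 (Or.inr (Or.inr one_ne_zero)) (by omega) ?_
  intro x y z s hx hy hz hne
  simp only [smul_smul] at hne ⊢
  have t1 := term_deg' A (s * x0) hx
  have t2 := term_deg' B (s * y0) hy
  have t3 := term_deg' C (s * 1) hz
  have c1 := term_coeff A (n := A.natDegree + B.natDegree + C.natDegree) (s * x0) hx (by omega)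
  have c2 := term_coeff B (n := A.natDegree + B.natDegree + C.natDegree) (s * y0) hy (by omega)
  have c3 := term_coeff C (n := A.natDegree + B.natDegree + C.natDegree) (s * 1) hz (by omega)
  refine lt_of_le_of_ne (natDegree_add_le_of_degree_le (natDegree_add_le_of_degree_le (by omega) (by omega)) (by omega)) ?_
  intro heq
  apply hne
  rw [← leadingCoeff_eq_zero, leadingCoeff, heq, coeff_add, coeff_add, c1, c2, c3]
  linear_combination s ^ 2 * h0

lemma legendre [Fintype F] (hodd : ringChar F ≠ 2) (A B C : F[X]) (hA : A ≠ 0) (hB : B ≠ 0) (hC : C ≠ 0)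
    (cAB : IsCoprime A B) (cAC : IsCoprime A C) (cBC : IsCoprime B C)
    (s1 : SqMod A (-(B * C))) (s2 : SqMod B (-(C * A))) (s3 : SqMod C (-(A * B))) :
    ∃ x y z : F[X], (x ≠ 0 ∨ y ≠ 0 ∨ z ≠ 0) ∧ A * x ^ 2 + B * y ^ 2 + C * z ^ 2 = 0 := by
  by_cases hab : A.natDegree % 2 = B.natDegree % 2
  · by_cases hac : A.natDegree % 2 = C.natDegree % 2
    · exact legendre_same hodd A B C hA hB hC cAB cAC cBC s1 s2 s3 hab hac
    · exact legendre_mixed A B C hA hB hC cAB cAC cBC s1 s2 s3 hab hac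
  · by_cases hac : A.natDegree % 2 = C.natDegree % 2
    · obtain ⟨z, x, y, h, e⟩ := legendre_mixed C A B hC hA hB cAC.symm cBC.symm cAB s3 s1 s2 hac.symm (by omega)
      exact ⟨x, y, z, by tauto, by linear_combination e⟩
    · obtain ⟨y, z, x, h, e⟩ := legendre_mixed B C A hB hC hA cBC cAB.symm cAC.symm s2 s3 s1 (by omega) (by omega)
      exact ⟨x, y, z, by tauto, by linear_combination e⟩

/-- solvability of `A x² + B y² = h p` -/
lemma core [Fintype F] (hodd : ringChar F ≠ 2) (A B h p : F[X]) (hA : A ≠ 0) (hB : B ≠ 0)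
    (hh : h.Monic) (hp : p.Monic) (hpi : Irreducible p)
    (cAB : IsCoprime A B) (cAh : IsCoprime A h) (cAp : IsCoprime A p)
    (cBh : IsCoprime B h) (cBp : IsCoprime B p) (chp : IsCoprime h p)
    (s1 : SqMod A (B * h * p)) (s2 : SqMod B (A * h * p)) (s3 : SqMod h (-(A * B)))
    (hinf : InfC A.leadingCoeff B.leadingCoeff A.natDegree B.natDegree (h.natDegree + p.natDegree))
    (han : ∀ x y : F[X], A * x ^ 2 + B * y ^ 2 = 0 → x = 0 ∧ y = 0) :
    ∃ x y z : F[X], z ≠ 0 ∧ A * x ^ 2 + B * y ^ 2 = h * p * z ^ 2 := by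
  have s4 := recip hodd A B h p hA hB hh hp hpi cAB cAh cAp cBh cBp s1 s2 s3 hinf
  have s5 : SqMod (-(h * p)) (-(A * B)) := (s3.mul s4 chp).of_dvd (by simp)
  obtain ⟨x, y, z, h0, e⟩ := legendre hodd A B (-(h * p)) hA hB
    (neg_ne_zero.mpr (mul_ne_zero hh.ne_zero hp.ne_zero)) cAB (cAh.mul_right cAp).neg_right (cBh.mul_right cBp).neg_right
    (by convert s1 using 1; ring) (by convert s2 using 1; ring) s5
  refine ⟨x, y, z, ?_, by linear_combination e⟩
  rintro rfl
  have := han x y (by linear_combination e)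
  tauto
end

section
variable {F : Type*} [Field F]

lemma aniso_deg {A B x y : F[X]} (hA : A ≠ 0) (hB : B ≠ 0) (hd : A.natDegree % 2 = B.natDegree % 2)
    (hn : ¬ IsSquare (-(A.leadingCoeff * B.leadingCoeff))) (h : x ≠ 0 ∨ y ≠ 0) :
    A * x ^ 2 + B * y ^ 2 ≠ 0 ∧ (A * x ^ 2 + B * y ^ 2).natDegree % 2 = A.natDegree % 2 := by
  have dg : ∀ {U v : F[X]}, U ≠ 0 → v ≠ 0 → (U * v ^ 2).natDegree = U.natDegree + 2 * v.natDegree := by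
    intro U v hU hv
    rw [natDegree_mul hU (pow_ne_zero 2 hv), natDegree_pow]
  have lc : ∀ {U v : F[X]}, (U * v ^ 2).leadingCoeff = U.leadingCoeff * v.leadingCoeff ^ 2 := by
    intro U v
    rw [leadingCoeff_mul, leadingCoeff_pow]
  by_cases hx : x = 0
  · have hy : y ≠ 0 := by tauto
    subst hx
    simp only [ne_eq, OfNat.ofNat_ne_zero, not_false_eq_true, zero_pow, mul_zero, zero_add]
    refine ⟨mul_ne_zero hB (pow_ne_zero 2 hy), ?_⟩
    rw [dg hB hy]; omega
  by_cases hy : y = 0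
  · subst hy
    simp only [ne_eq, OfNat.ofNat_ne_zero, not_false_eq_true, zero_pow, mul_zero, add_zero]
    refine ⟨mul_ne_zero hA (pow_ne_zero 2 hx), ?_⟩
    rw [dg hA hx]; omega
  have d1 := dg hA hx
  have d2 := dg hB hy
  have n1 : A * x ^ 2 ≠ 0 := mul_ne_zero hA (pow_ne_zero 2 hx)
  have n2 : B * y ^ 2 ≠ 0 := mul_ne_zero hB (pow_ne_zero 2 hy)
  rcases lt_trichotomy (A * x ^ 2).natDegree (B * y ^ 2).natDegree with hlt | heq | hlt
  · have e := natDegree_add_eq_right_of_natDegree_lt hlt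
    refine ⟨?_, by omega⟩
    intro h0
    rw [h0, natDegree_zero] at e
    omega
  · have hc : (A * x ^ 2 + B * y ^ 2).coeff (A * x ^ 2).natDegree ≠ 0 := by
      rw [coeff_add, coeff_natDegree, heq, coeff_natDegree, lc, lc]
      intro h0
      apply hn
      have hly : y.leadingCoeff ≠ 0 := leadingCoeff_ne_zero.mpr hy
      refine ⟨A.leadingCoeff * x.leadingCoeff / y.leadingCoeff, ?_⟩
      field_simp
      linear_combination -A.leadingCoeff * h0
    have hne : A * x ^ 2 + B * y ^ 2 ≠ 0 := by
      intro h0; rw [h0] at hc; simp at hc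
    refine ⟨hne, ?_⟩
    have h1 := le_natDegree_of_ne_zero hc
    have h2 : (A * x ^ 2 + B * y ^ 2).natDegree ≤ (A * x ^ 2).natDegree :=
      natDegree_add_le_of_degree_le le_rfl heq.ge
    omega
  · have e := natDegree_add_eq_left_of_natDegree_lt hlt
    refine ⟨?_, by omega⟩
    intro h0
    rw [h0, natDegree_zero] at e
    omega

lemma mkPerm (i j k l : Fin 4) (h : i ≠ j ∧ i ≠ k ∧ i ≠ l ∧ j ≠ k ∧ j ≠ l ∧ k ≠ l) :
    ∃ σ : Equiv.Perm (Fin 4), σ 0 = i ∧ σ 1 = j ∧ σ 2 = k ∧ σ 3 = l := by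
  have hinj : Function.Injective ![i, j, k, l] := by
    obtain ⟨h1, h2, h3, h4, h5, h6⟩ := h
    intro s t hst
    fin_cases s <;> fin_cases t <;> simp_all
  exact ⟨Equiv.ofBijective _ (Finite.injective_iff_bijective.mp hinj), rfl, rfl, rfl, rfl⟩

lemma choose_perm (u : Fin 4 → F) (d : Fin 4 → ℕ)
    (h4 : Nat.card {m : Fin 4 // IsSquare (u m)} ≥ Nat.card {m : Fin 4 // ¬ IsSquare (u m)})
    (hloc : ∀ σ : Equiv.Perm (Fin 4), d (σ 0) % 2 = d (σ 1) % 2 → d (σ 2) % 2 = d (σ 3) % 2 →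
      d (σ 0) % 2 ≠ d (σ 2) % 2 → IsSquare (-(u (σ 0) * u (σ 1))) ∨ IsSquare (-(u (σ 2) * u (σ 3)))) :
    ∃ (σ : Equiv.Perm (Fin 4)) (e : ℕ), InfC (u (σ 0)) (u (σ 1)) (d (σ 0)) (d (σ 1)) e ∧
      InfC (-u (σ 2)) (-u (σ 3)) (d (σ 2)) (d (σ 3)) e := by
  classical
  have three : ∀ i j k l : Fin 4, (i ≠ j ∧ i ≠ k ∧ i ≠ l ∧ j ≠ k ∧ j ≠ l ∧ k ≠ l) →
      d i % 2 = d j % 2 → d i % 2 = d k % 2 → ∃ (σ : Equiv.Perm (Fin 4)) (e : ℕ), InfC (u (σ 0)) (u (σ 1)) (d (σ 0)) (d (σ 1)) e ∧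
      InfC (-u (σ 2)) (-u (σ 3)) (d (σ 2)) (d (σ 3)) e := by
    intro i j k l hd hij hik
    obtain ⟨h1, h2, h3, h5, h6, h7⟩ := hd
    by_cases si : IsSquare (u i)
    · obtain ⟨σ, e0, e1, e2, e3⟩ := mkPerm i l j k (by tauto)
      refine ⟨σ, d i, ?_⟩
      rw [e0, e1, e2, e3]
      exact ⟨Or.inl ⟨rfl, si⟩, Or.inr (Or.inr (Or.inr ⟨by omega, by omega⟩))⟩
    by_cases sj : IsSquare (u j)
    · obtain ⟨σ, e0, e1, e2, e3⟩ := mkPerm j l i k (by tauto)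
      refine ⟨σ, d i, ?_⟩
      rw [e0, e1, e2, e3]
      exact ⟨Or.inl ⟨by omega, sj⟩, Or.inr (Or.inr (Or.inr ⟨by omega, by omega⟩))⟩
    by_cases sk : IsSquare (u k)
    · obtain ⟨σ, e0, e1, e2, e3⟩ := mkPerm k l i j (by tauto)
      refine ⟨σ, d i, ?_⟩
      rw [e0, e1, e2, e3]
      exact ⟨Or.inl ⟨by omega, sk⟩, Or.inr (Or.inr (Or.inr ⟨by omega, by omega⟩))⟩
    exfalso
    rw [Nat.card_eq_fintype_card, Nat.card_eq_fintype_card, Fintype.card_subtype, Fintype.card_subtype] at h4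
    have c3 : ({i, j, k} : Finset (Fin 4)).card = 3 := by
      rw [Finset.card_eq_three]; exact ⟨i, j, k, h1, h2, h5, rfl⟩
    have c1 : ({i, j, k} : Finset (Fin 4)) ⊆ Finset.univ.filter (fun m => ¬ IsSquare (u m)) := by
      intro m hm
      simp only [Finset.mem_insert, Finset.mem_singleton] at hm
      simp only [Finset.mem_filter, Finset.mem_univ, true_and]
      rcases hm with rfl | rfl | rfl <;> assumption
    have c2 := Finset.card_le_card c1
    have c4 := Finset.card_filter_add_card_filter_not (s := (Finset.univ : Finset (Fin 4))) (fun m => IsSquare (u m))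
    simp only [Finset.card_univ, Fintype.card_fin] at c4
    omega
  have two : ∀ i j k l : Fin 4, (i ≠ j ∧ i ≠ k ∧ i ≠ l ∧ j ≠ k ∧ j ≠ l ∧ k ≠ l) →
      d i % 2 = d j % 2 → d k % 2 = d l % 2 → d i % 2 ≠ d k % 2 → ∃ (σ : Equiv.Perm (Fin 4)) (e : ℕ), InfC (u (σ 0)) (u (σ 1)) (d (σ 0)) (d (σ 1)) e ∧
      InfC (-u (σ 2)) (-u (σ 3)) (d (σ 2)) (d (σ 3)) e := by
    intro i j k l hd hij hkl hik
    obtain ⟨σ, e0, e1, e2, e3⟩ := mkPerm i j k l hd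
    have := hloc σ
    rw [e0, e1, e2, e3] at this
    rcases this hij hkl hik with h | h
    · refine ⟨σ, d k, ?_⟩
      rw [e0, e1, e2, e3]
      exact ⟨Or.inr (Or.inr (Or.inl ⟨hij, h⟩)), Or.inr (Or.inr (Or.inr ⟨by omega, by omega⟩))⟩
    · refine ⟨σ, d i, ?_⟩
      rw [e0, e1, e2, e3]
      exact ⟨Or.inr (Or.inr (Or.inr ⟨by omega, by omega⟩)), Or.inr (Or.inr (Or.inl ⟨hkl, by rwa [neg_mul_neg]⟩))⟩
  by_cases h01 : d 0 % 2 = d 1 % 2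
  · by_cases h02 : d 0 % 2 = d 2 % 2
    · exact three 0 1 2 3 (by decide) h01 h02
    · by_cases h03 : d 0 % 2 = d 3 % 2
      · exact three 0 1 3 2 (by decide) h01 h03
      · exact two 0 1 2 3 (by decide) h01 (by omega) h02
  · by_cases h02 : d 0 % 2 = d 2 % 2
    · by_cases h03 : d 0 % 2 = d 3 % 2
      · exact three 0 2 3 1 (by decide) h02 h03
      · exact two 0 2 1 3 (by decide) h02 (by omega) h01
    · by_cases h03 : d 0 % 2 = d 3 % 2
      · exact two 0 3 1 2 (by decide) h03 (by omega) h01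
      · exact three 1 2 3 0 (by decide) (by omega) (by omega)

lemma crt_exists (D : F[X]) (hD : D ≠ 0) (r : F[X] → F[X]) :
    ∃ b : F[X], ∀ f : F[X], f.Monic → Irreducible f → f ∣ D → f ∣ b - r f := by
  classical
  let s := (UniqueFactorizationMonoid.normalizedFactors D).toFinset
  have hs : ∀ f ∈ s, f.Monic ∧ Irreducible f := by
    intro f hf
    have hf' := Multiset.mem_toFinset.mp hf
    have hi := UniqueFactorizationMonoid.irreducible_of_normalized_factor f hf'
    have hn := UniqueFactorizationMonoid.normalize_normalized_factor f hf'
    refine ⟨?_, hi⟩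
    rw [← hn]; exact monic_normalize hi.ne_zero
  obtain ⟨b, hb⟩ := IsDedekindDomain.exists_forall_sub_mem_ideal (s := s) (fun f => Ideal.span {f}) (fun _ => 1)
    (fun f hf => (Ideal.prime_span_singleton_iff).mpr (hs f hf).2.prime)
    (fun f hf g hg hne heq => hne (eq_of_monic_of_associated (hs f hf).1 (hs g hg).1 (Ideal.span_singleton_eq_span_singleton.mp heq)))
    (fun f => r f.1)
  refine ⟨b, fun f hf hi hd => ?_⟩
  have hmem : f ∈ s := by
    rw [Multiset.mem_toFinset, UniqueFactorizationMonoid.mem_normalizedFactors_iff' hD]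
    exact ⟨hi, hf.normalize_eq_self, hd⟩
  have := hb f hmem
  rwa [pow_one, Ideal.mem_span_singleton] at this

lemma SqMod.cancel {f g m : F[X]} (hc : IsCoprime f g) (h : SqMod f (g ^ 2 * m)) : SqMod f m := by
  obtain ⟨r, k, hk⟩ := h
  obtain ⟨u, v, huv⟩ := hc
  refine ⟨v * r, v ^ 2 * k - u * m * (1 + v * g), ?_⟩
  have : v * g = 1 - u * f := by linear_combination huv
  linear_combination v ^ 2 * hk + m * (1 + v * g) * huv

lemma SqMod.of_congr {f p c m : F[X]} (hp : f ∣ p - c) (h : SqMod f (m * c)) : SqMod f (m * p) := by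
  obtain ⟨r, hr⟩ := h
  refine ⟨r, ?_⟩
  have : r ^ 2 - m * p = (r ^ 2 - m * c) - m * (p - c) := by ring
  rw [this]
  exact dvd_sub hr (hp.mul_left _)

lemma coprime_of_monic {a b : F[X]} (ha : a ≠ 0) (h : ∀ f : F[X], f.Monic → Irreducible f → f ∣ a → f ∣ b → False) :
    IsCoprime a b := by
  classical
  apply isCoprime_of_prime_dvd (fun h => ha h.1)
  intro q hq h1 h2
  exact h (normalize q) (monic_normalize hq.ne_zero) ((normalize_associated q).irreducible_iff.mpr hq.irreducible)
    (normalize_dvd_iff.mpr h1) (normalize_dvd_iff.mpr h2)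

lemma InfC.shift {α β : F} {dA dB dC dg e : ℕ} (h : InfC α β (dA + dg) (dB + dg) e) (he : (dC + dg) % 2 = e % 2) :
    InfC α β dA dB dC :=
  h.imp (fun h => ⟨by omega, h.2⟩) (Or.imp (fun h => ⟨by omega, h.2⟩)
    (Or.imp (fun h => ⟨by omega, h.2⟩) (fun h => ⟨by omega, by omega⟩)))

lemma exists_gcd (a b : F[X]) (ha : a ≠ 0) (hsa : Squarefree a) : ∃ g A B : F[X], g.Monic ∧ a = g * A ∧ b = g * B ∧ IsCoprime A B ∧
    (∀ r : F[X], r ∣ a → r ∣ b → r ∣ g) ∧ Squarefree g ∧ Squarefree A ∧ A ≠ 0 := by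
  classical
  have hg0 : gcd a b ≠ 0 := by rw [Ne, gcd_eq_zero_iff]; tauto
  have hm : (gcd a b).Monic := by
    rw [← normalize_gcd]; exact monic_normalize hg0
  obtain ⟨A, hA⟩ := gcd_dvd_left a b
  obtain ⟨B, hB⟩ := gcd_dvd_right a b
  refine ⟨gcd a b, A, B, hm, hA, hB, ?_, fun r h1 h2 => dvd_gcd h1 h2, hsa.squarefree_of_dvd (gcd_dvd_left a b),
    hsa.squarefree_of_dvd (hA ▸ dvd_mul_left _ _), ?_⟩
  · obtain ⟨u, v, huv⟩ := exists_gcd_eq_mul_add_mul a b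
    refine ⟨u, v, ?_⟩
    apply mul_left_cancel₀ hg0
    linear_combination -huv - u * hA - v * hB
  · rintro rfl; exact ha (by rw [hA, mul_zero])
end

section
variable {F : Type*} [Field F]

lemma assemble [Fintype F] (hodd : ringChar F ≠ 2) (c : Fin 4 → F[X])
    (h0 : ∀ m, c m ≠ 0) (hsq : ∀ m, Squarefree (c m))
    (hcube : ∀ f : F[X], f.Monic → Irreducible f → ∀ i j k : Fin 4, i ≠ j → i ≠ k → j ≠ k →
      f ∣ c i → f ∣ c j → f ∣ c k → False)
    (hres : ∀ f : F[X], f.Monic → Irreducible f → ∀ i j k l : Fin 4,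
      ({i, j, k, l} : Finset (Fin 4)) = Finset.univ →
      ¬ f ∣ c i → ¬ f ∣ c j → f ∣ c k → f ∣ c l → SqMod f (-(c i * c j)))
    (hbin : ∀ i j : Fin 4, i ≠ j → ∀ x y : F[X], c i * x ^ 2 + c j * y ^ 2 = 0 → x = 0 ∧ y = 0)
    (e : ℕ) (i1 : InfC (c 0).leadingCoeff (c 1).leadingCoeff (c 0).natDegree (c 1).natDegree e)
    (i2 : InfC (-(c 2).leadingCoeff) (-(c 3).leadingCoeff) (c 2).natDegree (c 3).natDegree e) :
    ∃ (ε : ℕ) (b P₁ P₂ : F[X]), ε ≤ 1 ∧ IsCoprime b (c 0 * c 1 * c 2 * c 3) ∧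
      IsMonicGcd (c 0) (c 1) P₁ ∧ IsMonicGcd (c 2) (c 3) P₂ ∧
      ∀ p : F[X], p.Monic → Irreducible p →
        (c 0 * c 1 * c 2 * c 3) ∣ (p - b) → p.natDegree % 2 = ε →
        (∃ x y z : F[X], z ≠ 0 ∧ c 0 * x ^ 2 + c 1 * y ^ 2 = (P₁ * P₂ * p) * z ^ 2) ∧
        (∃ x y z : F[X], z ≠ 0 ∧ -(c 2 * x ^ 2) - c 3 * y ^ 2 = (P₁ * P₂ * p) * z ^ 2) := by
  classical
  obtain ⟨g, A, B, mg, e0, e1, cAB, gg, sg, sA, nA⟩ := exists_gcd (c 0) (c 1) (h0 0) (hsq 0)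
  obtain ⟨h, A2, B2, mh, e2, e3, cAB2, gh, sh, sA2, nA2⟩ := exists_gcd (c 2) (c 3) (h0 2) (hsq 2)
  have nB : B ≠ 0 := by rintro rfl; exact h0 1 (by rw [e1, mul_zero])
  have nB2 : B2 ≠ 0 := by rintro rfl; exact h0 3 (by rw [e3, mul_zero])
  have sB : Squarefree B := (hsq 1).squarefree_of_dvd (e1 ▸ dvd_mul_left _ _)
  have sB2 : Squarefree B2 := (hsq 3).squarefree_of_dvd (e3 ▸ dvd_mul_left _ _)
  have A0 : ∀ {f : F[X]}, f ∣ A → f ∣ c 0 := fun hf => e0 ▸ hf.mul_left _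
  have B1 : ∀ {f : F[X]}, f ∣ B → f ∣ c 1 := fun hf => e1 ▸ hf.mul_left _
  have A22 : ∀ {f : F[X]}, f ∣ A2 → f ∣ c 2 := fun hf => e2 ▸ hf.mul_left _
  have B23 : ∀ {f : F[X]}, f ∣ B2 → f ∣ c 3 := fun hf => e3 ▸ hf.mul_left _
  have g0 : ∀ {f : F[X]}, f ∣ g → f ∣ c 0 := fun hf => e0 ▸ hf.mul_right _
  have g1 : ∀ {f : F[X]}, f ∣ g → f ∣ c 1 := fun hf => e1 ▸ hf.mul_right _
  have hh2 : ∀ {f : F[X]}, f ∣ h → f ∣ c 2 := fun hf => e2 ▸ hf.mul_right _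
  have hh3 : ∀ {f : F[X]}, f ∣ h → f ∣ c 3 := fun hf => e3 ▸ hf.mul_right _
  -- exclusions
  have t012 : ∀ {f : F[X]}, f.Monic → Irreducible f → f ∣ c 0 → f ∣ c 1 → f ∣ c 2 → False :=
    fun m i => hcube _ m i 0 1 2 (by decide) (by decide) (by decide)
  have t013 : ∀ {f : F[X]}, f.Monic → Irreducible f → f ∣ c 0 → f ∣ c 1 → f ∣ c 3 → False :=
    fun m i => hcube _ m i 0 1 3 (by decide) (by decide) (by decide)
  have t023 : ∀ {f : F[X]}, f.Monic → Irreducible f → f ∣ c 0 → f ∣ c 2 → f ∣ c 3 → False :=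
    fun m i => hcube _ m i 0 2 3 (by decide) (by decide) (by decide)
  have t123 : ∀ {f : F[X]}, f.Monic → Irreducible f → f ∣ c 1 → f ∣ c 2 → f ∣ c 3 → False :=
    fun m i => hcube _ m i 1 2 3 (by decide) (by decide) (by decide)
  have xAB : ∀ {f : F[X]}, Irreducible f → f ∣ A → f ∣ B → False :=
    fun hi h1 h2 => hi.not_isUnit (cAB.isUnit_of_dvd' h1 h2)
  have xAB2 : ∀ {f : F[X]}, Irreducible f → f ∣ A2 → f ∣ B2 → False :=
    fun hi h1 h2 => hi.not_isUnit (cAB2.isUnit_of_dvd' h1 h2)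
  -- A, g are coprime by squarefreeness
  have xg : ∀ {f U V W : F[X]}, Irreducible f → Squarefree W → W = U * V → f ∣ U → f ∣ V → False := by
    intro f U V W hi hs hW h1 h2
    exact hi.not_isUnit (hs f (hW ▸ mul_dvd_mul h1 h2))
  have D0 : c 0 * c 1 * c 2 * c 3 ≠ 0 := by simp [h0]
  have dD : ∀ m, c m ∣ c 0 * c 1 * c 2 * c 3 := by
    intro m
    fin_cases m
    · exact ⟨c 1 * c 2 * c 3, by simp; ring⟩
    · exact ⟨c 0 * c 2 * c 3, by simp; ring⟩
    · exact ⟨c 0 * c 1 * c 3, by simp; ring⟩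
    · exact ⟨c 0 * c 1 * c 2, by simp; ring⟩
  obtain ⟨r, hr⟩ : ∃ r : F[X] → F[X], ∀ f, r f = if f ∣ A then B * h else if f ∣ B then A * h else
    if f ∣ A2 then -B2 * g else if f ∣ B2 then -A2 * g else 1 := ⟨_, fun _ => rfl⟩
  obtain ⟨b, hb⟩ := crt_exists (c 0 * c 1 * c 2 * c 3) D0 r
  have hrf : ∀ f : F[X], f.Monic → Irreducible f → ¬ f ∣ r f := by
    intro f mf hi hd
    rw [hr] at hd
    have hpr := hi.prime
    split_ifs at hd with q1 q2 q3 q4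
    · rcases hpr.dvd_or_dvd hd with hd | hd
      · exact xAB hi q1 hd
      · exact t023 mf hi (A0 q1) (hh2 hd) (hh3 hd)
    · rcases hpr.dvd_or_dvd hd with hd | hd
      · exact q1 hd
      · exact t123 mf hi (B1 q2) (hh2 hd) (hh3 hd)
    · rcases hpr.dvd_or_dvd hd with hd | hd
      · exact xAB2 hi q3 ((dvd_neg).mp hd)
      · exact t012 mf hi (g0 hd) (g1 hd) (A22 q3)
    · rcases hpr.dvd_or_dvd hd with hd | hd
      · exact q3 ((dvd_neg).mp hd)
      · exact t013 mf hi (g0 hd) (g1 hd) (B23 q4)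
    · exact hi.not_isUnit (isUnit_of_dvd_one hd)
  refine ⟨(e + g.natDegree + h.natDegree) % 2, b, g, h, by omega, ?_, ⟨mg, e0 ▸ dvd_mul_right _ _, e1 ▸ dvd_mul_right _ _, gg⟩,
    ⟨mh, e2 ▸ dvd_mul_right _ _, e3 ▸ dvd_mul_right _ _, gh⟩, ?_⟩
  · apply IsCoprime.symm
    apply coprime_of_monic D0
    intro f mf hi hd hfb
    apply hrf f mf hi
    have := dvd_sub hfb (hb f mf hi hd)
    simpa using this
  intro p mp ip hDp hdeg
  have hpr : ∀ f : F[X], f.Monic → Irreducible f → f ∣ c 0 * c 1 * c 2 * c 3 → f ∣ p - r f := by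
    intro f mf hi hd
    have := dvd_add (hd.trans hDp) (hb f mf hi hd)
    simpa using this
  have pD : ¬ p ∣ c 0 * c 1 * c 2 * c 3 := by
    intro hd
    apply hrf p mp ip
    have := dvd_sub (dvd_refl p) (hpr p mp ip hd)
    simpa using this
  have pc : ∀ U m, U ∣ c m → IsCoprime U p := by
    intro U m hU
    apply IsCoprime.symm
    rw [ip.coprime_iff_not_dvd]
    exact fun hp => pD ((hp.trans hU).trans (dD m))
  have sqs : ∀ {f m : F[X]} (s : F[X]), m = s * s → SqMod f m := fun {f m} s hs => ⟨s, by rw [hs, pow_two]; simp⟩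
  -- local conditions
  have S1 : SqMod A (B * h * p) := by
    apply SqMod.of_primes sA nA
    intro f mf hi hd
    have hp := hpr f mf hi ((A0 hd).trans (dD 0))
    rw [hr, if_pos hd] at hp
    exact SqMod.of_congr hp (sqs (B * h) rfl)
  have S2 : SqMod B (A * h * p) := by
    apply SqMod.of_primes sB nB
    intro f mf hi hd
    have hp := hpr f mf hi ((B1 hd).trans (dD 1))
    rw [hr, if_neg (fun h => xAB hi h hd), if_pos hd] at hp
    exact SqMod.of_congr hp (sqs (A * h) rfl)
  have S3 : SqMod h (-(A * B)) := by
    apply SqMod.of_primes sh mh.ne_zero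
    intro f mf hi hd
    have n0 : ¬ f ∣ c 0 := fun h0 => t023 mf hi h0 (hh2 hd) (hh3 hd)
    have n1 : ¬ f ∣ c 1 := fun h0 => t123 mf hi h0 (hh2 hd) (hh3 hd)
    have := hres f mf hi 0 1 2 3 (by decide) n0 n1 (hh2 hd) (hh3 hd)
    apply SqMod.cancel (g := g)
    · rw [hi.coprime_iff_not_dvd]; exact fun hg => n0 (g0 hg)
    · convert this using 1
      rw [e0, e1]; ring
  have T1 : SqMod (-A2) (-B2 * g * p) := by
    refine SqMod.of_dvd ?_ (neg_dvd.mpr dvd_rfl)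
    apply SqMod.of_primes sA2 nA2
    intro f mf hi hd
    have hp := hpr f mf hi ((A22 hd).trans (dD 2))
    rw [hr] at hp
    refine SqMod.of_congr hp ?_
    split_ifs with q1 q2
    · have := hres f mf hi 1 3 0 2 (by decide) (fun q => t012 mf hi (A0 q1) q (A22 hd)) (fun q => t023 mf hi (A0 q1) (A22 hd) q) (A0 q1) (A22 hd)
      convert this using 1
      rw [e1, e3]; ring
    · have := hres f mf hi 0 3 1 2 (by decide) (fun q => t012 mf hi q (B1 q2) (A22 hd)) (fun q => t123 mf hi (B1 q2) (A22 hd) q) (B1 q2) (A22 hd)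
      convert this using 1
      rw [e0, e3]; ring
    · exact sqs _ rfl
  have T2 : SqMod (-B2) (-A2 * g * p) := by
    refine SqMod.of_dvd ?_ (neg_dvd.mpr dvd_rfl)
    apply SqMod.of_primes sB2 nB2
    intro f mf hi hd
    have hp := hpr f mf hi ((B23 hd).trans (dD 3))
    rw [hr] at hp
    refine SqMod.of_congr hp ?_
    split_ifs with q1 q2 q3
    · have := hres f mf hi 1 2 0 3 (by decide) (fun q => t013 mf hi (A0 q1) q (B23 hd)) (fun q => t023 mf hi (A0 q1) q (B23 hd)) (A0 q1) (B23 hd)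
      convert this using 1
      rw [e1, e2]; ring
    · have := hres f mf hi 0 2 1 3 (by decide) (fun q => t013 mf hi q (B1 q2) (B23 hd)) (fun q => t123 mf hi (B1 q2) q (B23 hd)) (B1 q2) (B23 hd)
      convert this using 1
      rw [e0, e2]; ring
    · exact (xAB2 hi q3 hd).elim
    · exact sqs _ rfl
  have T3 : SqMod g (-(-A2 * -B2)) := by
    apply SqMod.of_primes sg mg.ne_zero
    intro f mf hi hd
    have n2 : ¬ f ∣ c 2 := fun h0 => t012 mf hi (g0 hd) (g1 hd) h0
    have n3 : ¬ f ∣ c 3 := fun h0 => t013 mf hi (g0 hd) (g1 hd) h0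
    have := hres f mf hi 2 3 0 1 (by decide) n2 n3 (g0 hd) (g1 hd)
    apply SqMod.cancel (g := h)
    · rw [hi.coprime_iff_not_dvd]; exact fun hg => n2 (hh2 hg)
    · convert this using 1
      rw [e2, e3]; ring
  -- coprimality
  have cAh : IsCoprime A h := coprime_of_monic nA fun f mf hi q1 q2 => t023 mf hi (A0 q1) (hh2 q2) (hh3 q2)
  have cBh : IsCoprime B h := coprime_of_monic nB fun f mf hi q1 q2 => t123 mf hi (B1 q1) (hh2 q2) (hh3 q2)
  have cA2g : IsCoprime A2 g := coprime_of_monic nA2 fun f mf hi q1 q2 => t012 mf hi (g0 q2) (g1 q2) (A22 q1)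
  have cB2g : IsCoprime B2 g := coprime_of_monic nB2 fun f mf hi q1 q2 => t013 mf hi (g0 q2) (g1 q2) (B23 q1)
  have cAp := pc A 0 (A0 dvd_rfl)
  have cBp := pc B 1 (B1 dvd_rfl)
  have cA2p := pc A2 2 (A22 dvd_rfl)
  have cB2p := pc B2 3 (B23 dvd_rfl)
  have cgp := pc g 0 (g0 dvd_rfl)
  have chp := pc h 2 (hh2 dvd_rfl)
  -- infinity
  have J1 : InfC A.leadingCoeff B.leadingCoeff A.natDegree B.natDegree (h.natDegree + p.natDegree) := by
    rw [e0, e1, leadingCoeff_mul, leadingCoeff_mul, mg.leadingCoeff, one_mul, one_mul, natDegree_mul mg.ne_zero nA,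
      natDegree_mul mg.ne_zero nB, add_comm g.natDegree, add_comm g.natDegree] at i1
    exact i1.shift (by omega)
  have J2 : InfC (-A2).leadingCoeff (-B2).leadingCoeff (-A2).natDegree (-B2).natDegree (g.natDegree + p.natDegree) := by
    rw [e2, e3, leadingCoeff_mul, leadingCoeff_mul, mh.leadingCoeff, one_mul, one_mul, natDegree_mul mh.ne_zero nA2,
      natDegree_mul mh.ne_zero nB2, add_comm h.natDegree, add_comm h.natDegree] at i2
    rw [leadingCoeff_neg, leadingCoeff_neg, natDegree_neg, natDegree_neg]
    exact i2.shift (by omega)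
  constructor
  · obtain ⟨x, y, z, hz, he⟩ := core hodd A B h p nA nB mh mp ip cAB cAh cAp cBh cBp chp S1 S2 S3 J1 (by
      intro x y hxy
      apply hbin 0 1 (by decide) x y
      rw [e0, e1]; linear_combination g * hxy)
    refine ⟨x, y, z, hz, ?_⟩
    rw [e0, e1]; linear_combination g * he
  · obtain ⟨x, y, z, hz, he⟩ := core hodd (-A2) (-B2) g p (neg_ne_zero.mpr nA2) (neg_ne_zero.mpr nB2) mg mp ip cAB2.neg_neg
      cA2g.neg_left cA2p.neg_left cB2g.neg_left cB2p.neg_left cgp T1 T2 T3 J2 (by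
      intro x y hxy
      apply hbin 2 3 (by decide) x y
      rw [e2, e3]; linear_combination -h * hxy)
    refine ⟨x, y, z, hz, ?_⟩
    rw [e2, e3]; linear_combination h * he
end

/-- clearing denominators in an isotropic vector -/
theorem clear_denoms {F : Type*} [Field F] (a : Fin 4 → F[X])
    (hiso : ∃ x : Fin 4 → RatFunc F, x ≠ 0 ∧
      ∑ m, algebraMap F[X] (RatFunc F) (a m) * x m ^ 2 = 0) :
    ∃ y : Fin 4 → F[X], y ≠ 0 ∧ ∑ m, a m * y m ^ 2 = 0 := by
  have hinj : Function.Injective (algebraMap F[X] (RatFunc F)) := RatFunc.algebraMap_injective F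
  obtain ⟨x, hx0, hx⟩ := hiso
  obtain ⟨b, hb⟩ := IsLocalization.exist_integer_multiples_of_finite (nonZeroDivisors F[X]) x
  choose y hy using hb
  have hb0 : algebraMap F[X] (RatFunc F) (b : F[X]) ≠ 0 := by
    intro h
    exact nonZeroDivisors.coe_ne_zero b (hinj (by rw [h, map_zero]))
  have hy' : ∀ m, algebraMap F[X] (RatFunc F) (y m) = algebraMap F[X] (RatFunc F) (b : F[X]) * x m := by
    intro m
    rw [hy m, Algebra.smul_def]
  refine ⟨y, ?_, ?_⟩
  · rintro rfl
    apply hx0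
    funext m
    have := hy' m
    rw [Pi.zero_apply, map_zero] at this
    exact (mul_eq_zero.mp this.symm).resolve_left hb0
  · apply hinj
    rw [map_sum, map_zero]
    simp only [map_mul, map_pow, hy', mul_pow]
    calc _ = algebraMap F[X] (RatFunc F) (b : F[X]) ^ 2 *
          ∑ m, algebraMap F[X] (RatFunc F) (a m) * x m ^ 2 := by
            rw [Finset.mul_sum]
            exact Finset.sum_congr rfl fun m _ => by ring
      _ = 0 := by rw [hx, mul_zero]

/-- the local condition at infinity -/
theorem local_infty {F : Type*} [Field F] (a : Fin 4 → F[X]) (h0 : ∀ m, a m ≠ 0)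
    (y : Fin 4 → F[X]) (hy0 : y ≠ 0) (hy : ∑ m, a m * y m ^ 2 = 0) :
    ∀ σ : Equiv.Perm (Fin 4), (a (σ 0)).natDegree % 2 = (a (σ 1)).natDegree % 2 →
      (a (σ 2)).natDegree % 2 = (a (σ 3)).natDegree % 2 →
      (a (σ 0)).natDegree % 2 ≠ (a (σ 2)).natDegree % 2 →
      IsSquare (-((a (σ 0)).leadingCoeff * (a (σ 1)).leadingCoeff)) ∨
      IsSquare (-((a (σ 2)).leadingCoeff * (a (σ 3)).leadingCoeff)) := by
  intro σ h01 h23 h02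
  by_contra hcon
  push Not at hcon
  obtain ⟨n1, n2⟩ := hcon
  have hs : (a (σ 0) * y (σ 0) ^ 2 + a (σ 1) * y (σ 1) ^ 2) +
      (a (σ 2) * y (σ 2) ^ 2 + a (σ 3) * y (σ 3) ^ 2) = 0 := by
    rw [← Equiv.sum_comp σ, Fin.sum_univ_four] at hy
    rw [← hy]; ring
  have k1 := fun hx => aniso_deg (x := y (σ 0)) (y := y (σ 1)) (h0 (σ 0)) (h0 (σ 1)) h01 n1 hx
  have k2 := fun hx => aniso_deg (x := y (σ 2)) (y := y (σ 3)) (h0 (σ 2)) (h0 (σ 3)) h23 n2 hx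
  have z1 : y (σ 0) ≠ 0 ∨ y (σ 1) ≠ 0 ∨ y (σ 2) ≠ 0 ∨ y (σ 3) ≠ 0 := by
    by_contra hz
    push Not at hz
    apply hy0
    funext m
    obtain ⟨i, rfl⟩ := σ.surjective m
    fin_cases i
    · exact hz.1
    · exact hz.2.1
    · exact hz.2.2.1
    · exact hz.2.2.2
  have hneg : a (σ 2) * y (σ 2) ^ 2 + a (σ 3) * y (σ 3) ^ 2 =
      -(a (σ 0) * y (σ 0) ^ 2 + a (σ 1) * y (σ 1) ^ 2) := by linear_combination hs
  by_cases w1 : y (σ 0) ≠ 0 ∨ y (σ 1) ≠ 0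
  · by_cases w2 : y (σ 2) ≠ 0 ∨ y (σ 3) ≠ 0
    · have q1 := (k1 w1).2
      have q2 := (k2 w2).2
      rw [hneg, natDegree_neg] at q2
      omega
    · push Not at w2
      rw [w2.1, w2.2] at hneg
      apply (k1 w1).1
      linear_combination hneg
  · have w2 : y (σ 2) ≠ 0 ∨ y (σ 3) ≠ 0 := by
      rcases z1 with h | h | h
      · exact absurd (Or.inl h) w1
      · exact absurd (Or.inr h) w1
      · exact h
    push Not at w1
    rw [w1.1, w1.2] at hneg
    apply (k2 w2).1
    rw [hneg]; ring

/-- splitting an isotropic minimized quaternary form whose binary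
subforms are all anisotropic: there are a permutation `σ`, a parity `ε` and a residue
class `b` modulo `D = a₁a₂a₃a₄` such that for every monic irreducible `a ≡ b (mod D)` of
degree `≡ ε (mod 2)`, both `a_{σ(1)}x² + a_{σ(2)}y² = P·a` and
`−a_{σ(3)}z² − a_{σ(4)}w² = P·a` are solvable over `𝔽_q(t)`, where `P` is the product of
the monic gcd of `a_{σ(1)}, a_{σ(2)}` with the monic gcd of `a_{σ(3)}, a_{σ(4)}`. -/
theorem splitting_quaternary
    {F : Type*} [Field F] [Fintype F] (hodd : ringChar F ≠ 2)
    (a : Fin 4 → F[X]) (hmin : IsMinimized a)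
    (hiso : ∃ x : Fin 4 → RatFunc F, x ≠ 0 ∧
      ∑ m, algebraMap F[X] (RatFunc F) (a m) * x m ^ 2 = 0)
    (hbin : ∀ i j : Fin 4, i ≠ j → ∀ x y : RatFunc F,
      algebraMap F[X] (RatFunc F) (a i) * x ^ 2 +
        algebraMap F[X] (RatFunc F) (a j) * y ^ 2 = 0 → x = 0 ∧ y = 0) :
    ∃ (σ : Equiv.Perm (Fin 4)) (ε : ℕ) (b P₁ P₂ : F[X]),
      ε ≤ 1 ∧
      IsCoprime b (a 0 * a 1 * a 2 * a 3) ∧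
      IsMonicGcd (a (σ 0)) (a (σ 1)) P₁ ∧
      IsMonicGcd (a (σ 2)) (a (σ 3)) P₂ ∧
      ∀ p : F[X], p.Monic → Irreducible p →
        (a 0 * a 1 * a 2 * a 3) ∣ (p - b) → p.natDegree % 2 = ε →
        (∃ x y : RatFunc F,
          algebraMap F[X] (RatFunc F) (a (σ 0)) * x ^ 2 +
            algebraMap F[X] (RatFunc F) (a (σ 1)) * y ^ 2 =
          algebraMap F[X] (RatFunc F) (P₁ * P₂ * p)) ∧
        (∃ z w : RatFunc F,
          -(algebraMap F[X] (RatFunc F) (a (σ 2)) * z ^ 2) -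
            algebraMap F[X] (RatFunc F) (a (σ 3)) * w ^ 2 =
          algebraMap F[X] (RatFunc F) (P₁ * P₂ * p)) := by
  obtain ⟨h0, hsq, hcub, hres, h4⟩ := hmin
  have hinj : Function.Injective (algebraMap F[X] (RatFunc F)) := RatFunc.algebraMap_injective F
  obtain ⟨y, hy0, hy⟩ := clear_denoms a hiso
  have hloc := local_infty a h0 y hy0 hy
  obtain ⟨σ, e, i1, i2⟩ := choose_perm (fun m => (a m).leadingCoeff) (fun m => (a m).natDegree) h4 hloc
  have hprod : ∀ τ : Equiv.Perm (Fin 4), a (τ 0) * a (τ 1) * a (τ 2) * a (τ 3) = a 0 * a 1 * a 2 * a 3 := by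
    intro τ
    have := Equiv.prod_comp τ a
    rwa [Fin.prod_univ_four, Fin.prod_univ_four] at this
  obtain ⟨ε, b, P₁, P₂, hε, hb, hP₁, hP₂, H⟩ := assemble hodd (fun m => a (σ m)) (fun m => h0 _) (fun m => hsq _)
    (by
      intro f mf hi i j k hij hik hjk d1 d2 d3
      obtain ⟨l, hl⟩ : ∃ l : Fin 4, i ≠ l ∧ j ≠ l ∧ k ≠ l := by
        clear d1 d2 d3; revert i j k; decide
      obtain ⟨τ, t0, t1, t2, t3⟩ := mkPerm i j k l ⟨hij, hik, hl.1, hjk, hl.2.1, hl.2.2⟩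
      apply hcub f mf hi
      rw [← hprod (τ.trans σ)]
      simp only [Equiv.trans_apply, t0, t1, t2, t3]
      rw [pow_succ, pow_two]
      exact (mul_dvd_mul (mul_dvd_mul d1 d2) d3).mul_right _)
    (by
      intro f mf hi i j k l hu n1 n2 d1 d2
      have hu' : ({σ i, σ j, σ k, σ l} : Finset (Fin 4)) = Finset.univ := by
        have := congrArg (Finset.image σ) hu
        simpa [Finset.image_insert] using this
      obtain ⟨s, hs⟩ := hres f mf hi _ _ _ _ hu' n1 n2 d1 d2
      obtain ⟨r, rfl⟩ := Ideal.Quotient.mk_surjective s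
      refine ⟨r, ?_⟩
      rw [← Ideal.mem_span_singleton, ← Ideal.Quotient.eq_zero_iff_mem, map_sub, map_pow, hs]
      ring)
    (by
      intro i j hij x y hxy
      have := hbin (σ i) (σ j) (fun h => hij (σ.injective h)) (algebraMap F[X] (RatFunc F) x) (algebraMap F[X] (RatFunc F) y)
        (by rw [← map_pow, ← map_pow, ← map_mul, ← map_mul, ← map_add, hxy, map_zero])
      exact ⟨hinj (by rw [this.1, map_zero]), hinj (by rw [this.2, map_zero])⟩)
    e i1 i2
  rw [hprod] at hb
  refine ⟨σ, ε, b, P₁, P₂, hε, hb, hP₁, hP₂, ?_⟩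
  intro p mp ip hd hdeg
  obtain ⟨⟨x, y, z, hz, h1⟩, ⟨x', y', z', hz', h2⟩⟩ := H p mp ip (by rw [hprod]; exact hd) hdeg
  have nz : ∀ {z : F[X]}, z ≠ 0 → algebraMap F[X] (RatFunc F) z ≠ 0 := by
    intro z hz h
    exact hz (hinj (by rw [h, map_zero]))
  constructor
  · refine ⟨algebraMap F[X] (RatFunc F) x / algebraMap F[X] (RatFunc F) z,
      algebraMap F[X] (RatFunc F) y / algebraMap F[X] (RatFunc F) z, ?_⟩
    have h1' := congrArg (algebraMap F[X] (RatFunc F)) h1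
    simp only [map_add, map_mul, map_pow] at h1' ⊢
    have := nz hz
    field_simp
    linear_combination h1'
  · refine ⟨algebraMap F[X] (RatFunc F) x' / algebraMap F[X] (RatFunc F) z',
      algebraMap F[X] (RatFunc F) y' / algebraMap F[X] (RatFunc F) z', ?_⟩
    have h1' := congrArg (algebraMap F[X] (RatFunc F)) h2
    simp only [map_sub, map_neg, map_mul, map_pow] at h1' ⊢
    have := nz hz'
    field_simp
    linear_combination h1'
end
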